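/- arXiv:1312.7510 — 3 statements merged into one kernel-verified Lean document; each statement's English description precedes it below -/
import Mathlib

section
/- For every T > 0 there is a constant C > 0 such that dist²(G, SO̅(d)) ≤ C · W_cell(G) for all G ∈ ℝ^{d×2^d} with G ⊥ V₀ and |G| ≤ T, where V₀ = {(v,…,v) : v ∈ ℝᵈ} is the subspace of translations. -/
open scoped BigOperators ENNReal Pointwise
open MeasureTheory Filter Set

attribute [local instance] Classical.propDecidable

noncomputable section

namespace Cleavage

/-- `ℝ^{d × 2^d}`: matrices whose columns are indexed by the corner bit-vectors of a cell. -/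
abbrev CellMat (d : ℕ) := Fin d → (Fin d → Bool) → ℝ

/-- Euclidean norm on `ℝ^n`. -/
def eunorm {n : ℕ} (v : Fin n → ℝ) : ℝ := Real.sqrt (∑ i, v i ^ 2)

/-- Frobenius (Euclidean) norm on `ℝ^{d×2^d}`. -/
def mnorm {d : ℕ} (G : CellMat d) : ℝ := Real.sqrt (∑ j, ∑ b, G j b ^ 2)

/-- corner of the reference cube `[-1/2,1/2)^d` indexed by a bit-vector. -/
def cornerVec {d : ℕ} (b : Fin d → Bool) : Fin d → ℝ := fun i => if b i then 1 / 2 else -(1 / 2)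

/-- the matrix `Z` whose columns are the corners `z_i = A·(±1/2,…,±1/2)` of the reference cell. -/
def Zmat (d : ℕ) (A : Matrix (Fin d) (Fin d) ℝ) : CellMat d := fun j b => A.mulVec (cornerVec b) j

/-- `R ∈ SO(d)`. -/
def IsSO {d : ℕ} (R : Matrix (Fin d) (Fin d) ℝ) : Prop := R.transpose * R = 1 ∧ R.det = 1

/-- the product `R G` of a `d×d` matrix with an element of `ℝ^{d×2^d}`. -/
def rotCell {d : ℕ} (R : Matrix (Fin d) (Fin d) ℝ) (G : CellMat d) : CellMat d :=
  fun j b => ∑ i, R j i * G i b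

/-- `F · Z`. -/
def matZ (d : ℕ) (A F : Matrix (Fin d) (Fin d) ℝ) : CellMat d := rotCell F (Zmat d A)

/-- the translation `(c,…,c)`. -/
def transCell {d : ℕ} (c : Fin d → ℝ) : CellMat d := fun j _ => c j

/-- `SO̅(d) = { R Z : R ∈ SO(d) }`. -/
def SObar (d : ℕ) (A : Matrix (Fin d) (Fin d) ℝ) : Set (CellMat d) :=
  {G | ∃ R : Matrix (Fin d) (Fin d) ℝ, IsSO R ∧ G = rotCell R (Zmat d A)}

/-- Euclidean distance of `G` to `SO̅(d)`. -/
def distSObar (d : ℕ) (A : Matrix (Fin d) (Fin d) ℝ) (G : CellMat d) : ℝ :=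
  sInf {t | ∃ H ∈ SObar d A, t = mnorm (G - H)}

/-- `G ⊥ V₀`, i.e. the columns of `G` sum to zero. -/
def PerpTrans {d : ℕ} (G : CellMat d) : Prop := ∀ j, ∑ b, G j b = 0

/-- Frobenius inner product. -/
def frobInner {d : ℕ} (G H : CellMat d) : ℝ := ∑ j, ∑ b, G j b * H j b

/-- the quadratic form `Q_cell(G) = D²W_cell(Z)[G,G]`. -/
def Qcell (d : ℕ) (A : Matrix (Fin d) (Fin d) ℝ) (W : CellMat d → ℝ) (G : CellMat d) : ℝ :=
  iteratedFDeriv ℝ 2 W (Zmat d A) ![G, G]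

/-- Assumption (i): frame indifference. -/
def FrameIndiff (d : ℕ) (W : CellMat d → ℝ) : Prop :=
  ∀ (G : CellMat d) (R : Matrix (Fin d) (Fin d) ℝ) (c : Fin d → ℝ),
    IsSO R → W (rotCell R G + transCell c) = W G

/-- Assumption (ii): the zero set of the energy. -/
def MinimalOnSO (d : ℕ) (A : Matrix (Fin d) (Fin d) ℝ) (W : CellMat d → ℝ) : Prop :=
  ∀ G : CellMat d, W G = 0 ↔ ∃ R : Matrix (Fin d) (Fin d) ℝ, IsSO R ∧
    ∃ c : Fin d → ℝ, G = rotCell R (Zmat d A) + transCell c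

/-- Assumption (iii), smoothness part: `W` continuous and `C²` near `SO̅(d)`. -/
def SmoothNearSO (d : ℕ) (A : Matrix (Fin d) (Fin d) ℝ) (W : CellMat d → ℝ) : Prop :=
  Continuous W ∧ ∃ U : Set (CellMat d), IsOpen U ∧ SObar d A ⊆ U ∧ ContDiffOn ℝ 2 W U

/-- Assumption (iii), positivity part: `Q_cell` positive definite orthogonally to
translations and infinitesimal rotations. -/
def HessPosDef (d : ℕ) (A : Matrix (Fin d) (Fin d) ℝ) (W : CellMat d → ℝ) : Prop :=
  ∀ G : CellMat d, G ≠ 0 → (∀ c : Fin d → ℝ, frobInner G (transCell c) = 0) →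
    (∀ H : Matrix (Fin d) (Fin d) ℝ, H.transpose = -H → frobInner G (rotCell H (Zmat d A)) = 0) →
    0 < Qcell d A W G

/-- a partition `𝒵 = 𝒵₁ ∪̇ … ∪̇ 𝒵ₙ` of the corners. -/
def IsCellPartition {d n : ℕ} (P : Fin n → Finset (Fin d → Bool)) : Prop :=
  (∀ i, (P i).Nonempty) ∧ (∀ i j, i ≠ j → Disjoint (P i) (P j)) ∧
    Finset.univ.biUnion P = Finset.univ

/-- `(1/2) Σ_{i≠j} Σ_{z_s ∈ 𝒵ᵢ} Σ_{z_t ∈ 𝒵ⱼ} β(z_s,z_t)`. -/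
def crossSum {d n : ℕ} (β : (Fin d → Bool) → (Fin d → Bool) → ℝ)
    (P : Fin n → Finset (Fin d → Bool)) : ℝ :=
  (1 / 2) * ∑ i, ∑ j, if i = j then 0 else ∑ s ∈ P i, ∑ t ∈ P j, β s t

/-- `M ≤ d(G;𝒵ᵢ,𝒵ⱼ)` for all `i ≠ j`. -/
def Separated {d n : ℕ} (M : ℝ) (P : Fin n → Finset (Fin d → Bool)) (G : CellMat d) : Prop :=
  ∀ i j, i ≠ j → ∀ s ∈ P i, ∀ t ∈ P j, M ≤ eunorm (fun jj => G jj s - G jj t)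

/-- `G[𝒵ᵢ]`. -/
def restrictCols {d n : ℕ} (P : Fin n → Finset (Fin d → Bool)) (G : CellMat d) (i : Fin n) :
    {b // b ∈ P i} → Fin d → ℝ := fun b jj => G jj b.1

/-- Assumption (iv): decomposition into pair interactions at large separation,
with the compatibility condition near `SO̅(d)`. -/
def PairDecomposition (d : ℕ) (A : Matrix (Fin d) (Fin d) ℝ) (W : CellMat d → ℝ)
    (β : (Fin d → Bool) → (Fin d → Bool) → ℝ) : Prop :=
  ∀ (n : ℕ), 2 ≤ n → ∀ P : Fin n → Finset (Fin d → Bool), IsCellPartition P →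
    ∃ Wc : (i : Fin n) → ({b // b ∈ P i} → Fin d → ℝ) → ℝ,
      (∀ i v, 0 ≤ Wc i v) ∧
      (∀ δ : ℝ, 0 < δ → ∃ M : ℝ, ∀ G : CellMat d, Separated M P G →
        |W G - ((∑ i, Wc i (restrictCols P G i)) + crossSum β P)| ≤ δ) ∧
      (∃ C, 0 < C ∧ ∃ U : Set (CellMat d), IsOpen U ∧ SObar d A ⊆ U ∧
        ∀ H ∈ U, ∀ i, Wc i (restrictCols P H i) ≤ C * W H)

/-- the triple sum of assumption (iv) is strictly positive unless `n = 1`. -/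
def CrossPos (d : ℕ) (β : (Fin d → Bool) → (Fin d → Bool) → ℝ) : Prop :=
  ∀ (n : ℕ), 2 ≤ n → ∀ P : Fin n → Finset (Fin d → Bool), IsCellPartition P → 0 < crossSum β P

def dotp {n : ℕ} (v w : Fin n → ℝ) : ℝ := ∑ i, v i * w i

/-- the set of interaction directions `𝒱 = A{-1,0,1}^d \ {0}`. -/
def Vfin (d : ℕ) (A : Matrix (Fin d) (Fin d) ℝ) : Finset (Fin d → ℝ) :=
  ((Finset.univ : Finset (Fin d → Fin 3)).image fun t =>
    A.mulVec fun i => ((t i : ℕ) : ℝ) - 1).erase 0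

/-- `(1/2) β(z_s,z_t) = 2^{k-d} β(ν)` whenever `z_s - z_t = ν`, `ν` having `k` non-zero entries. -/
def BetaNuCompat (d : ℕ) (A : Matrix (Fin d) (Fin d) ℝ)
    (β : (Fin d → Bool) → (Fin d → Bool) → ℝ) (βν : (Fin d → ℝ) → ℝ) : Prop :=
  ∀ s t : Fin d → Bool, s ≠ t →
    (1 / 2) * β s t =
      (2 : ℝ) ^ ((((Finset.univ.filter fun i => s i ≠ t i)).card : ℤ) - (d : ℤ)) *
        βν (A.mulVec fun i => cornerVec s i - cornerVec t i)

/-- `β_A = min_{ξ ≠ 0} Σ_ν β(ν)|ν·ξ| / |e₁·ξ|`. -/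
def betaA (d : ℕ) [NeZero d] (A : Matrix (Fin d) (Fin d) ℝ) (βν : (Fin d → ℝ) → ℝ) : ℝ :=
  sInf {q | ∃ ξ : Fin d → ℝ, ξ ≠ 0 ∧ ξ 0 ≠ 0 ∧
    q = (∑ ν ∈ Vfin d A, βν ν * |dotp ν ξ|) / |ξ 0|}

/-- `α_A`, characterized as the minimal value `Q̃(1)` of the reduced minimization problem. -/
def alphaA (d : ℕ) [NeZero d] (A : Matrix (Fin d) (Fin d) ℝ) (W : CellMat d → ℝ) : ℝ :=
  sInf {q | ∃ G : Matrix (Fin d) (Fin d) ℝ, G 0 0 = 1 ∧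
    q = Qcell d A W (matZ d A ((1 / 2 : ℝ) • (G + G.transpose)))}

def M1 (d : ℕ) (A : Matrix (Fin d) (Fin d) ℝ) (βν : (Fin d → ℝ) → ℝ) : ℝ :=
  sInf {m | ∃ ξ : Fin d → ℝ, eunorm ξ = 1 ∧ m = ∑ ν ∈ Vfin d A, βν ν * |dotp ν ξ|}

def M2 (d : ℕ) (A : Matrix (Fin d) (Fin d) ℝ) (βν : (Fin d → ℝ) → ℝ) : ℝ :=
  sSup {m | ∃ ξ : Fin d → ℝ, eunorm ξ = 1 ∧ m = ∑ ν ∈ Vfin d A, βν ν * |dotp ν ξ|}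

/-! lattice geometry: the (translated) lattice `ε(ρ + A(k + u))`. -/

def latPt (d : ℕ) (A : Matrix (Fin d) (Fin d) ℝ) (ε : ℝ) (rv : Fin d → ℝ) (k : Fin d → ℤ)
    (u : Fin d → ℝ) : Fin d → ℝ :=
  ε • A.mulVec fun i => rv i + (k i : ℝ) + u i

def cellCorner (d : ℕ) (A : Matrix (Fin d) (Fin d) ℝ) (ε : ℝ) (rv : Fin d → ℝ) (k : Fin d → ℤ)
    (b : Fin d → Bool) : Fin d → ℝ :=
  latPt d A ε rv k fun i => if b i then 1 else 0

/-- the discrete gradient `∇̄y = ε⁻¹(y₁ - ȳ, …, y_{2^d} - ȳ)` on the cell with index `k`. -/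
def dgrad (d : ℕ) (A : Matrix (Fin d) (Fin d) ℝ) (ε : ℝ) (rv : Fin d → ℝ)
    (y : (Fin d → ℝ) → Fin d → ℝ) (k : Fin d → ℤ) : CellMat d :=
  fun j b =>
    (y (cellCorner d A ε rv k b) j -
      (∑ b' : Fin d → Bool, y (cellCorner d A ε rv k b') j) / 2 ^ d) / ε

/-- the piecewise affine interpolation on the reference cube `[0,1]^n`, obtained inductively
over face dimension through the barycenters of the faces.  On each simplex of the associated
barycentric decomposition it is the affine interpolation of the corner/barycenter values; it is
computed here radially from the barycenter. -/
def cubeInterp : (n : ℕ) → ((Fin n → Bool) → ℝ) → (Fin n → ℝ) → ℝ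
  | 0, f, _ => f fun i => i.elim0
  | n + 1, f, x =>
    let c : ℝ := (∑ b : Fin (n + 1) → Bool, f b) / 2 ^ (n + 1)
    have h : ∃ i : Fin (n + 1), ∀ j : Fin (n + 1), |x j - 1 / 2| ≤ |x i - 1 / 2| :=
      Finite.exists_max fun i => |x i - 1 / 2|
    let i0 := Classical.choose h
    let t := 2 * |x i0 - 1 / 2|
    if t = 0 then c
    else
      (1 - t) * c +
        t * cubeInterp n (fun bb => f (i0.insertNth (if (1 : ℝ) / 2 < x i0 then true else false) bb))
          (fun j => 1 / 2 + (x (i0.succAbove j) - 1 / 2) / t)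

/-- the index of the lattice cell containing `x`. -/
def cellIndex (d : ℕ) (A : Matrix (Fin d) (Fin d) ℝ) (ε : ℝ) (rv : Fin d → ℝ)
    (x : Fin d → ℝ) : Fin d → ℤ :=
  fun i => ⌊(ε • A)⁻¹.mulVec x i - rv i⌋

/-- the reference coordinate (in `[0,1)^d`) of `x` inside its cell. -/
def refCoord (d : ℕ) (A : Matrix (Fin d) (Fin d) ℝ) (ε : ℝ) (rv : Fin d → ℝ)
    (x : Fin d → ℝ) : Fin d → ℝ :=
  fun i => (ε • A)⁻¹.mulVec x i - rv i - (cellIndex d A ε rv x i : ℝ)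

/-- a cell is intact if `diam{∇̄y, 𝒵} ≤ C_int`. -/
def IntactCell (d : ℕ) (A : Matrix (Fin d) (Fin d) ℝ) (ε : ℝ) (rv : Fin d → ℝ) (Cint : ℝ)
    (y : (Fin d → ℝ) → Fin d → ℝ) (k : Fin d → ℤ) : Prop :=
  ∀ b b' : Fin d → Bool,
    eunorm (fun jj => y (cellCorner d A ε rv k b) jj - y (cellCorner d A ε rv k b') jj) ≤ Cint * ε

/-- the interpolation `ỹ`: the simplicial interpolation on intact cells; on broken cells,
componentwise the simplicial interpolation where `diam_i ≤ C_int` and the affine fallback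
`ỹ^i(x) = y^i(z₁) + (x - z₁)_i` otherwise. -/
def tildey (d : ℕ) (A : Matrix (Fin d) (Fin d) ℝ) (ε : ℝ) (rv : Fin d → ℝ) (Cint : ℝ)
    (y : (Fin d → ℝ) → Fin d → ℝ) (x : Fin d → ℝ) : Fin d → ℝ := fun j =>
  let k := cellIndex d A ε rv x
  if IntactCell d A ε rv Cint y k then
    cubeInterp d (fun b => y (cellCorner d A ε rv k b) j) (refCoord d A ε rv x)
  else if ∀ b b' : Fin d → Bool,
      |y (cellCorner d A ε rv k b) j - y (cellCorner d A ε rv k b') j| ≤ Cint * ε then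
    cubeInterp d (fun b => y (cellCorner d A ε rv k b) j) (refCoord d A ε rv x)
  else
    y (cellCorner d A ε rv k fun _ => false) j + (x j - cellCorner d A ε rv k (fun _ => false) j)

/-- the mesoscopic exponent `s = (3d-1)/(3d)`. -/
def sExp (d : ℕ) : ℝ := (3 * d - 1) / (3 * d)


/-! the mesoscopic cell `U_ε = (0,ℓ) × (0,w)^{d-1}` and its energies. -/

def Ubox (d : ℕ) [NeZero d] (ℓ w : ℝ) : Set (Fin d → ℝ) :=
  {x | x 0 ∈ Ioo 0 ℓ ∧ ∀ i : Fin d, i ≠ 0 → x i ∈ Ioo 0 w}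

/-- inner cells: the closure of the cell is contained in `U_ε`. -/
def InnerCellM (d : ℕ) [NeZero d] (A : Matrix (Fin d) (Fin d) ℝ) (ε : ℝ) (rv : Fin d → ℝ)
    (ℓ w : ℝ) (k : Fin d → ℤ) : Prop :=
  ∀ u : Fin d → ℝ, (∀ i, u i ∈ Icc (0 : ℝ) 1) → latPt d A ε rv k u ∈ Ubox d ℓ w

def tailCoords (d : ℕ) (x : Fin d → ℝ) : Fin (d - 1) → ℝ := fun i => x ⟨i.1 + 1, by omega⟩

def consd (d : ℕ) [NeZero d] (a : ℝ) (x' : Fin (d - 1) → ℝ) : Fin d → ℝ :=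
  fun j => if h : (j : ℕ) = 0 then a else x' ⟨(j : ℕ) - 1, by omega⟩

/-- the boundary faces `{0,ℓ} × w·Ws`. -/
def FaceSet (d : ℕ) [NeZero d] (ℓ w : ℝ) (Ws : Set (Fin (d - 1) → ℝ)) : Set (Fin d → ℝ) :=
  {x | (x 0 = 0 ∨ x 0 = ℓ) ∧ tailCoords d x ∈ w • Ws}

/-- cells whose closure meets the boundary faces `{0,ℓ} × w·Ws`. -/
def BoundaryCellM (d : ℕ) [NeZero d] (A : Matrix (Fin d) (Fin d) ℝ) (ε : ℝ) (rv : Fin d → ℝ)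
    (ℓ w : ℝ) (Ws : Set (Fin (d - 1) → ℝ)) (k : Fin d → ℤ) : Prop :=
  ∃ u : Fin d → ℝ, (∀ i, u i ∈ Icc (0 : ℝ) 1) ∧ latPt d A ε rv k u ∈ FaceSet d ℓ w Ws

/-- `E(U_ε, y)`: sum of the cell energies over the inner cells plus one half of the sum over
the boundary cells. -/
def EnergyMeso (d : ℕ) [NeZero d] (A : Matrix (Fin d) (Fin d) ℝ) (Wcell : CellMat d → ℝ)
    (ε : ℝ) (rv : Fin d → ℝ) (ℓ w : ℝ) (Ws : Set (Fin (d - 1) → ℝ))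
    (y : (Fin d → ℝ) → Fin d → ℝ) : ℝ :=
  ε ^ (d - 1) *
    ((∑' k : Fin d → ℤ, if InnerCellM d A ε rv ℓ w k then Wcell (dgrad d A ε rv y k) else 0) +
      (1 / 2) * ∑' k : Fin d → ℤ,
        if BoundaryCellM d A ε rv ℓ w Ws k then Wcell (dgrad d A ε rv y k) else 0)

/-- a cell is `1`-broken if `diam₁{∇̄y, 𝒵} > C*_int`. -/
def OneBroken (d : ℕ) [NeZero d] (A : Matrix (Fin d) (Fin d) ℝ) (ε : ℝ) (rv : Fin d → ℝ)
    (Cstar : ℝ) (y : (Fin d → ℝ) → Fin d → ℝ) (k : Fin d → ℤ) : Prop :=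
  ∃ b b' : Fin d → Bool,
    Cstar * ε < |y (cellCorner d A ε rv k b) 0 - y (cellCorner d A ε rv k b') 0|

/-- the (half open) cell with index `k`. -/
def cellRegion (d : ℕ) (A : Matrix (Fin d) (Fin d) ℝ) (ε : ℝ) (rv : Fin d → ℝ)
    (k : Fin d → ℤ) : Set (Fin d → ℝ) :=
  {x | ∃ u : Fin d → ℝ, (∀ i, u i ∈ Ico (0 : ℝ) 1) ∧ x = latPt d A ε rv k u}

/-- the averaged boundary condition
`(1/(w^{d-1}|W|)) ∫_{w·W} (ỹ¹(ℓ,x') - ỹ¹(0,x')) dx' = ℓ(1+r)`. -/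
def AvgBC (d : ℕ) [NeZero d] (A : Matrix (Fin d) (Fin d) ℝ) (ε : ℝ) (rv : Fin d → ℝ)
    (Cstar ℓ w : ℝ) (Ws : Set (Fin (d - 1) → ℝ)) (y : (Fin d → ℝ) → Fin d → ℝ) (r : ℝ) : Prop :=
  (∫ x' in w • Ws,
      (tildey d A ε rv Cstar y (consd d ℓ x') 0 - tildey d A ε rv Cstar y (consd d 0 x') 0)) =
    w ^ (d - 1) * (volume Ws).toReal * (ℓ * (1 + r))

/-- no `1`-broken cell meets the boundary faces `{0,ℓ} × w·W̃`. -/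
def NoBrokenFace (d : ℕ) [NeZero d] (A : Matrix (Fin d) (Fin d) ℝ) (ε : ℝ) (rv : Fin d → ℝ)
    (Cstar ℓ w : ℝ) (Wts : Set (Fin (d - 1) → ℝ)) (y : (Fin d → ℝ) → Fin d → ℝ) : Prop :=
  ∀ k : Fin d → ℤ, OneBroken d A ε rv Cstar y k →
    cellRegion d A ε rv k ∩ FaceSet d ℓ w Wts = ∅

/-- the mesoscopic minimization problem `M(U_ε, r)`. -/
def Mmeso (d : ℕ) [NeZero d] (A : Matrix (Fin d) (Fin d) ℝ) (Wcell : CellMat d → ℝ)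
    (ε : ℝ) (rv : Fin d → ℝ) (Cstar ℓ w : ℝ) (Wts Ws : Set (Fin (d - 1) → ℝ)) (r : ℝ) : ℝ :=
  sInf {e | ∃ y : (Fin d → ℝ) → Fin d → ℝ,
    AvgBC d A ε rv Cstar ℓ w Ws y r ∧ NoBrokenFace d A ε rv Cstar ℓ w Wts y ∧
    e = EnergyMeso d A Wcell ε rv ℓ w Ws y}

def einfDist {n : ℕ} (x : Fin n → ℝ) (S : Set (Fin n → ℝ)) : ℝ :=
  sInf {t | ∃ z ∈ S, t = eunorm fun i => x i - z i}

/-- the condition (W form): a connected subset of `(0,1)^{d-1}` of measure in `(1/2, 1]` whose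
boundary has `H^{d-2}`-measure `< D`. -/
def WFormP (d : ℕ) (D : ℝ) (S : Set (Fin (d - 1) → ℝ)) : Prop :=
  (∀ x ∈ S, ∀ i, x i ∈ Ioo (0 : ℝ) 1) ∧ IsConnected S ∧
    1 / 2 < (volume S).toReal ∧ (volume S).toReal ≤ 1 ∧
    μH[(d : ℝ) - 2] (frontier S) < ENNReal.ofReal D

/-- the subset of `W̃` of points of distance `> D'ε^{1-s}` from `∂W̃`. -/
def coreSet (d : ℕ) (D' ε : ℝ) (Wts : Set (Fin (d - 1) → ℝ)) : Set (Fin (d - 1) → ℝ) :=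
  {x ∈ Wts | D' * ε ^ (1 - sExp d) < einfDist x (frontier Wts)}

/-- `W` is the connected component of largest Lebesgue measure of `coreSet`. -/
def LargestComp (d : ℕ) (D' ε : ℝ) (Wts Ws : Set (Fin (d - 1) → ℝ)) : Prop :=
  ∃ x₀ ∈ coreSet d D' ε Wts, Ws = connectedComponentIn (coreSet d D' ε Wts) x₀ ∧
    ∀ x ∈ coreSet d D' ε Wts, volume (connectedComponentIn (coreSet d D' ε Wts) x) ≤ volume Ws

/-- the admissible pairs `(W̃, W)`. -/
def AdmissiblePair (d : ℕ) (D D' ε : ℝ) (Wts Ws : Set (Fin (d - 1) → ℝ)) : Prop :=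
  WFormP d D Wts ∧ LargestComp d D' ε Wts Ws ∧ WFormP d D Ws

/-! the macroscopic body `Ω = (0,l₁) × … × (0,l_d)`. -/

def OmegaBox (d : ℕ) (l : Fin d → ℝ) : Set (Fin d → ℝ) := {x | ∀ i, x i ∈ Ioo 0 (l i)}

def InnerCellOmega (d : ℕ) (A : Matrix (Fin d) (Fin d) ℝ) (ε : ℝ) (l : Fin d → ℝ)
    (k : Fin d → ℤ) : Prop :=
  ∀ u : Fin d → ℝ, (∀ i, u i ∈ Icc (0 : ℝ) 1) → latPt d A ε 0 k u ∈ OmegaBox d l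

/-- the rescaled energy `𝓔_ε(y) = ε^{d-1} Σ_{inner cells} W_cell(∇̄y)`. -/
def EnergyOmega (d : ℕ) (A : Matrix (Fin d) (Fin d) ℝ) (Wcell : CellMat d → ℝ) (ε : ℝ)
    (l : Fin d → ℝ) (y : (Fin d → ℝ) → Fin d → ℝ) : ℝ :=
  ε ^ (d - 1) * ∑' k : Fin d → ℤ,
    if InnerCellOmega d A ε l k then Wcell (dgrad d A ε 0 y k) else 0

/-- `l_A = Σ_j |v_j · e₁|`. -/
def lA (d : ℕ) [NeZero d] (A : Matrix (Fin d) (Fin d) ℝ) : ℝ := ∑ j, |A 0 j|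

/-- the boundary condition of the class `𝒜(a_ε)`:
`y¹(x) = (1+a)x₁` for lattice points `x ∈ Ω` with `x₁ ≤ 2l_Aε` or `x₁ ≥ l₁ - 2l_Aε`. -/
def BdryCondA (d : ℕ) [NeZero d] (A : Matrix (Fin d) (Fin d) ℝ) (ε : ℝ) (l : Fin d → ℝ)
    (a : ℝ) (y : (Fin d → ℝ) → Fin d → ℝ) : Prop :=
  ∀ k : Fin d → ℤ, latPt d A ε 0 k 0 ∈ OmegaBox d l →
    ((latPt d A ε 0 k 0) 0 ≤ 2 * lA d A * ε ∨ l 0 - 2 * lA d A * ε ≤ (latPt d A ε 0 k 0) 0) →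
    y (latPt d A ε 0 k 0) 0 = (1 + a) * (latPt d A ε 0 k 0) 0

/-- `inf {𝓔_ε(y) : y ∈ 𝒜(a_ε)}`. -/
def minEnergy (d : ℕ) [NeZero d] (A : Matrix (Fin d) (Fin d) ℝ) (Wcell : CellMat d → ℝ)
    (ε : ℝ) (l : Fin d → ℝ) (a : ℝ) : ℝ :=
  sInf {e | ∃ y : (Fin d → ℝ) → Fin d → ℝ,
    BdryCondA d A ε l a y ∧ e = EnergyOmega d A Wcell ε l y}

/-! helpers for the interpolation lemmas. -/

/-- the simplicial interpolation on the single cell with index `k`. -/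
def cellInterp (d : ℕ) (A : Matrix (Fin d) (Fin d) ℝ) (ε : ℝ) (rv : Fin d → ℝ)
    (y : (Fin d → ℝ) → Fin d → ℝ) (k : Fin d → ℤ) (x : Fin d → ℝ) : Fin d → ℝ :=
  fun j => cubeInterp d (fun b => y (cellCorner d A ε rv k b) j)
    (fun i => (ε • A)⁻¹.mulVec x i - rv i - (k i : ℝ))

/-- the gradient of a map `ℝ^d → ℝ^d` as a `d×d` array. -/
def gradM (d : ℕ) (f : (Fin d → ℝ) → Fin d → ℝ) (x : Fin d → ℝ) : Fin d → Fin d → ℝ :=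
  fun j i => fderiv ℝ f x (Pi.single i 1) j

def sqnorm (d : ℕ) (F : Fin d → Fin d → ℝ) : ℝ := Real.sqrt (∑ j, ∑ i, F j i ^ 2)

/-- Euclidean distance of a `d×d` matrix to `SO(d)`. -/
def distSO (d : ℕ) (F : Fin d → Fin d → ℝ) : ℝ :=
  sInf {t | ∃ R : Matrix (Fin d) (Fin d) ℝ, IsSO R ∧ t = sqnorm d fun j i => F j i - R j i}

/-- `∇̄y` as a (piecewise constant) function on `ℝ^d`. -/
def dgradFun (d : ℕ) (A : Matrix (Fin d) (Fin d) ℝ) (ε : ℝ) (rv : Fin d → ℝ)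
    (y : (Fin d → ℝ) → Fin d → ℝ) (x : Fin d → ℝ) : CellMat d :=
  dgrad d A ε rv y (cellIndex d A ε rv x)

/-- the directional interpolation `ȳ_ν` on the cells `ε D^ν(λ + [0,1)^d)`. -/
def barInterp (d : ℕ) [NeZero d] (ε Cint : ℝ) (Dν : Matrix (Fin d) (Fin d) ℝ) (ν : Fin d → ℝ)
    (y : (Fin d → ℝ) → Fin d → ℝ) (x : Fin d → ℝ) : Fin d → ℝ :=
  let u := (ε • Dν)⁻¹.mulVec x
  let x0 := ε • Dν.mulVec fun i => (⌊u i⌋ : ℝ)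
  let x1 := fun i => x0 i + ε * ν i
  if eunorm (fun j => y x1 j - y x0 j) ≤ Cint * ε then
    fun j => (1 - (u 0 - (⌊u 0⌋ : ℝ))) * y x0 j + (u 0 - (⌊u 0⌋ : ℝ)) * y x1 j
  else y x0

end Cleavage

namespace Cleavage

/-! ### Auxiliary lemmas -/

/-- squared Frobenius norm. -/
def msq {d : ℕ} (G : CellMat d) : ℝ := ∑ j, ∑ b, G j b ^ 2

lemma msq_nonneg {d : ℕ} (G : CellMat d) : 0 ≤ msq G :=
  Finset.sum_nonneg fun _ _ => Finset.sum_nonneg fun _ _ => sq_nonneg _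

lemma mnorm_sq {d : ℕ} (G : CellMat d) : mnorm G ^ 2 = msq G :=
  Real.sq_sqrt (msq_nonneg G)

lemma mnorm_nonneg' {d : ℕ} (G : CellMat d) : 0 ≤ mnorm G := Real.sqrt_nonneg _

lemma msq_continuous {d : ℕ} : Continuous (msq : CellMat d → ℝ) := by
  unfold msq; fun_prop

lemma mnorm_continuous {d : ℕ} : Continuous (mnorm : CellMat d → ℝ) :=
  Real.continuous_sqrt.comp msq_continuous

lemma norm_le_mnorm {d : ℕ} (G : CellMat d) : ‖G‖ ≤ mnorm G := by
  refine (pi_norm_le_iff_of_nonneg (mnorm_nonneg' G)).2 fun j =>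
    (pi_norm_le_iff_of_nonneg (mnorm_nonneg' G)).2 fun b => ?_
  rw [Real.norm_eq_abs]
  refine Real.abs_le_sqrt ?_
  have h1 : G j b ^ 2 ≤ ∑ b, G j b ^ 2 :=
    Finset.single_le_sum (f := fun b => G j b ^ 2) (fun _ _ => sq_nonneg _) (Finset.mem_univ b)
  have h2 : ∑ b, G j b ^ 2 ≤ ∑ j, ∑ b, G j b ^ 2 :=
    Finset.single_le_sum (f := fun j => ∑ b, G j b ^ 2)
      (fun _ _ => Finset.sum_nonneg fun _ _ => sq_nonneg _) (Finset.mem_univ j)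
  exact h1.trans h2

lemma msq_le_norm {d : ℕ} (G : CellMat d) : msq G ≤ ((d : ℝ) * 2 ^ d) * ‖G‖ ^ 2 := by
  have : msq G ≤ ∑ _j : Fin d, ∑ _b : Fin d → Bool, ‖G‖ ^ 2 := by
    refine Finset.sum_le_sum fun j _ => Finset.sum_le_sum fun b _ => ?_
    rw [← sq_abs, ← Real.norm_eq_abs]
    have : ‖G j b‖ ≤ ‖G‖ := (norm_le_pi_norm (G j) b).trans (norm_le_pi_norm G j)
    gcongr
  refine this.trans (le_of_eq ?_)
  simp [mul_assoc]

lemma rotCell_mul {d : ℕ} (R S : Matrix (Fin d) (Fin d) ℝ) (G : CellMat d) :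
    rotCell (R * S) G = rotCell R (rotCell S G) := by
  funext j b
  exact congrFun (congrFun (Matrix.mul_assoc R S (Matrix.of G)) j) b

lemma rotCell_one {d : ℕ} (G : CellMat d) : rotCell 1 G = G := by
  funext j b
  exact congrFun (congrFun (Matrix.one_mul (Matrix.of G)) j) b

lemma rotCell_sub {d : ℕ} (R : Matrix (Fin d) (Fin d) ℝ) (G H : CellMat d) :
    rotCell R (G - H) = rotCell R G - rotCell R H := by
  funext j b
  simp [rotCell, mul_sub, Finset.sum_sub_distrib]

lemma msq_eq_trace {d : ℕ} (G : CellMat d) :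
    msq G = ((Matrix.of G).transpose * Matrix.of G).trace := by
  simp only [msq, Matrix.trace, Matrix.diag, Matrix.mul_apply, Matrix.transpose_apply,
    Matrix.of_apply]
  rw [Finset.sum_comm]
  simp [sq]

lemma msq_rotCell {d : ℕ} (R : Matrix (Fin d) (Fin d) ℝ) (hR : R.transpose * R = 1)
    (G : CellMat d) : msq (rotCell R G) = msq G := by
  have h : Matrix.of (rotCell R G) = R * Matrix.of G := rfl
  rw [msq_eq_trace, msq_eq_trace, h, Matrix.transpose_mul, Matrix.mul_assoc,
    ← Matrix.mul_assoc R.transpose, hR, Matrix.one_mul]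

lemma isSO_one {d : ℕ} : IsSO (1 : Matrix (Fin d) (Fin d) ℝ) := by
  constructor
  · simp
  · exact Matrix.det_one

lemma IsSO.tr {d : ℕ} {R : Matrix (Fin d) (Fin d) ℝ} (h : IsSO R) : IsSO R.transpose := by
  refine ⟨?_, by rw [Matrix.det_transpose]; exact h.2⟩
  rw [Matrix.transpose_transpose]
  exact mul_eq_one_comm.1 h.1

lemma IsSO.mul {d : ℕ} {R S : Matrix (Fin d) (Fin d) ℝ} (h : IsSO R) (h' : IsSO S) :
    IsSO (R * S) := by
  refine ⟨?_, by rw [Matrix.det_mul, h.2, h'.2, one_mul]⟩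
  rw [Matrix.transpose_mul, Matrix.mul_assoc, ← Matrix.mul_assoc R.transpose, h.1, Matrix.one_mul,
    h'.1]

lemma isCompact_SO {d : ℕ} : IsCompact {R : Matrix (Fin d) (Fin d) ℝ | IsSO R} := by
  have hc : IsCompact (Set.univ.pi fun _ : Fin d => Set.univ.pi fun _ : Fin d =>
      Icc (-1 : ℝ) 1) :=
    isCompact_univ_pi fun _ => isCompact_univ_pi fun _ => isCompact_Icc
  refine IsCompact.of_isClosed_subset (t := {R : Matrix (Fin d) (Fin d) ℝ | IsSO R}) hc ?_ ?_
  · have h1 : Continuous fun R : Matrix (Fin d) (Fin d) ℝ => R.transpose * R :=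
      (continuous_id.matrix_transpose).matrix_mul continuous_id
    have h2 : Continuous fun R : Matrix (Fin d) (Fin d) ℝ => R.det := continuous_id.matrix_det
    exact (isClosed_eq h1 continuous_const).inter (isClosed_eq h2 continuous_const)
  · intro R hR i _ j _
    have h : (R.transpose * R) j j = 1 := by rw [hR.1]; simp
    rw [Matrix.mul_apply] at h
    have h1 : R i j * R i j ≤ 1 := by
      rw [← h]
      exact Finset.single_le_sum (f := fun i => R i j * R i j)
        (fun _ _ => mul_self_nonneg _) (Finset.mem_univ i)
    exact abs_le.1 (abs_le_of_sq_le_sq (by simpa [sq] using h1) zero_le_one)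

open scoped Matrix.Norms.Operator in
lemma exists_curve {d : ℕ} (H : Matrix (Fin d) (Fin d) ℝ) (hH : H.transpose = -H) :
    ∃ E : ℝ → Matrix (Fin d) (Fin d) ℝ, (∀ t, IsSO (E t)) ∧ E 0 = 1 ∧
      ∀ i j, HasDerivAt (fun t => E t i j) (H i j) 0 := by
  have horth : ∀ t : ℝ, (NormedSpace.exp (t • H)).transpose * NormedSpace.exp (t • H) = 1 := by
    intro t
    rw [← Matrix.exp_transpose, Matrix.transpose_smul, hH, smul_neg,
      ← Matrix.exp_add_of_commute _ _ (Commute.neg_left (Commute.refl (t • H)))]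
    simp
  refine ⟨fun t => NormedSpace.exp (t • H), fun t => ⟨horth t, ?_⟩, by simp, ?_⟩
  · have h2 : NormedSpace.exp (t • H) =
        NormedSpace.exp ((t / 2) • H) * NormedSpace.exp ((t / 2) • H) := by
      rw [← Matrix.exp_add_of_commute _ _ (Commute.refl _), ← add_smul, add_halves]
    have h3 := congrArg Matrix.det (horth (t / 2))
    rw [Matrix.det_mul, Matrix.det_transpose, Matrix.det_one] at h3
    change (NormedSpace.exp (t • H)).det = 1
    rw [h2, Matrix.det_mul, h3]
  · intro i j
    have h := hasDerivAt_exp_smul_const' H (0 : ℝ)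
    rw [zero_smul, NormedSpace.exp_zero, mul_one] at h
    let L : Matrix (Fin d) (Fin d) ℝ →ₗ[ℝ] ℝ :=
      { toFun := fun M => M i j, map_add' := fun _ _ => rfl, map_smul' := fun _ _ => rfl }
    exact (LinearMap.toContinuousLinearMap L).hasFDerivAt.comp_hasDerivAt (0 : ℝ) h

/-- first order optimality of the nearest rotation. -/
lemma optimality {d : ℕ} (G Z : CellMat d)
    (hmin : ∀ R : Matrix (Fin d) (Fin d) ℝ, IsSO R → msq (G - Z) ≤ msq (G - rotCell R Z))
    (H : Matrix (Fin d) (Fin d) ℝ) (hH : H.transpose = -H) :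
    frobInner (G - Z) (rotCell H Z) = 0 := by
  obtain ⟨E, hE, hE0, hEd⟩ := exists_curve H hH
  have hd : HasDerivAt (fun t => msq (G - rotCell (E t) Z))
      (∑ j, ∑ b, 2 * (G j b - Z j b) * (-(rotCell H Z j b))) 0 := by
    unfold msq
    refine HasDerivAt.fun_sum fun j _ => HasDerivAt.fun_sum fun b _ => ?_
    have h1 : HasDerivAt (fun t => rotCell (E t) Z j b) (rotCell H Z j b) 0 := by
      unfold rotCell
      exact HasDerivAt.fun_sum fun i _ => (hEd j i).mul_const _
    have h2 := (h1.const_sub (G j b)).fun_pow 2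
    rw [hE0, rotCell_one] at h2
    simpa using h2
  have hl : IsLocalMin (fun t => msq (G - rotCell (E t) Z)) 0 := by
    refine Filter.Eventually.of_forall fun t => ?_
    simp only [hE0, rotCell_one]
    exact hmin _ (hE t)
  have h0 := hl.hasDerivAt_eq_zero hd
  have : (∑ j, ∑ b, 2 * (G j b - Z j b) * (-(rotCell H Z j b))) =
      -2 * frobInner (G - Z) (rotCell H Z) := by
    simp only [frobInner, Finset.mul_sum, Pi.sub_apply]
    refine Finset.sum_congr rfl fun j _ => Finset.sum_congr rfl fun b _ => ?_
    ring
  rw [this] at h0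
  linarith

lemma perp_Z {d : ℕ} (A : Matrix (Fin d) (Fin d) ℝ) : PerpTrans (Zmat d A) := by
  have hc : ∀ i : Fin d, ∑ b : Fin d → Bool, cornerVec b i = 0 := by
    intro i
    have h : ∑ b : Fin d → Bool, cornerVec b i = ∑ b : Fin d → Bool, -cornerVec b i := by
      refine Fintype.sum_equiv
        (Function.Involutive.toPerm (fun b : Fin d → Bool => fun k => !(b k))
          (fun b => by funext k; simp)) _ _ fun b => ?_
      change cornerVec b i = -cornerVec (fun k => !(b k)) i
      rcases hb : b i with _ | _ <;> simp [cornerVec, hb]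
    rw [Finset.sum_neg_distrib] at h
    linarith
  intro j
  simp only [Zmat, Matrix.mulVec, dotProduct]
  rw [Finset.sum_comm]
  simp [← Finset.mul_sum, hc]

lemma perp_rot {d : ℕ} (R : Matrix (Fin d) (Fin d) ℝ) {G : CellMat d} (h : PerpTrans G) :
    PerpTrans (rotCell R G) := by
  intro j
  simp only [rotCell]
  rw [Finset.sum_comm]
  simp [← Finset.mul_sum, h _]

lemma perp_sub {d : ℕ} {G H : CellMat d} (h : PerpTrans G) (h' : PerpTrans H) :
    PerpTrans (G - H) := by
  intro j
  simp [Finset.sum_sub_distrib, h j, h' j]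

lemma taylor_lower {E : Type*} [NormedAddCommGroup E] [NormedSpace ℝ E] (f : E → ℝ) (z : E)
    (hf : ContDiffAt ℝ 2 f z) (hmin : IsLocalMin f z) (ε : ℝ) (hε : 0 < ε) :
    ∃ δ > 0, ∀ v : E, ‖v‖ < δ →
      f z + 1 / 2 * iteratedFDeriv ℝ 2 f z ![v, v] - ε / 2 * ‖v‖ ^ 2 ≤ f (z + v) := by
  have h1 : ∀ᶠ x in nhds z, DifferentiableAt ℝ f x :=
    (hf.eventually (by simp)).mono fun x hx => hx.differentiableAt (by simp)
  have h2 : DifferentiableAt ℝ (fderiv ℝ f) z :=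
    (hf.fderiv_right (m := 1) (by norm_num)).differentiableAt (by simp)
  have h3 : fderiv ℝ f z = 0 := hmin.fderiv_eq_zero
  have h4 := h2.hasFDerivAt.isLittleO.def hε
  obtain ⟨δ, hδ, hball⟩ := Metric.eventually_nhds_iff.1 (h1.and h4)
  refine ⟨δ, hδ, fun v hv => ?_⟩
  set B := fderiv ℝ (fderiv ℝ f) z
  rw [iteratedFDeriv_two_apply]
  simp only [Matrix.cons_val_zero, Matrix.cons_val_one]
  change f z + 1 / 2 * B v v - _ ≤ _
  have key : ∀ t ∈ Icc (0 : ℝ) 1, HasDerivAt (fun t : ℝ => f (z + t • v) - t ^ 2 / 2 * B v v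
      + ε / 2 * t ^ 2 * ‖v‖ ^ 2)
      (fderiv ℝ f (z + t • v) v - t * B v v + ε * t * ‖v‖ ^ 2) t ∧
      0 ≤ fderiv ℝ f (z + t • v) v - t * B v v + ε * t * ‖v‖ ^ 2 := by
    intro t ht
    have hn : ‖t • v‖ ≤ ‖v‖ := by
      rw [norm_smul, Real.norm_eq_abs, abs_of_nonneg ht.1]
      exact mul_le_of_le_one_left (norm_nonneg _) ht.2
    obtain ⟨hd, ho⟩ := hball (y := z + t • v) (by
      rw [dist_eq_norm, add_sub_cancel_left]; exact hn.trans_lt hv)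
    constructor
    · have hl : HasDerivAt (fun t : ℝ => z + t • v) v t := by
        simpa using ((hasDerivAt_id t).smul_const v).const_add z
      have hc := hd.hasFDerivAt.comp_hasDerivAt t hl
      have hp : HasDerivAt (fun t : ℝ => t ^ 2) (2 * t) t := by
        simpa using hasDerivAt_pow 2 t
      have := (hc.sub ((hp.div_const 2).mul_const (B v v))).add
        ((hp.const_mul (ε / 2)).mul_const (‖v‖ ^ 2))
      convert! this using 1
      ring
    · rw [h3, sub_zero, add_sub_cancel_left] at ho
      have h5 : ‖(fderiv ℝ f (z + t • v) - B (t • v)) v‖ ≤ ε * ‖t • v‖ * ‖v‖ :=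
        ((fderiv ℝ f (z + t • v) - B (t • v)).le_opNorm v).trans (by gcongr)
      rw [Real.norm_eq_abs, norm_smul, Real.norm_eq_abs, abs_of_nonneg ht.1] at h5
      have h6 := (abs_le.1 h5).1
      simp only [map_smul, ContinuousLinearMap.sub_apply, ContinuousLinearMap.smul_apply,
        smul_eq_mul] at h6
      nlinarith [h6]
  have hmono : MonotoneOn (fun t : ℝ => f (z + t • v) - t ^ 2 / 2 * B v v
      + ε / 2 * t ^ 2 * ‖v‖ ^ 2) (Icc 0 1) := by
    refine monotoneOn_of_deriv_nonneg (convex_Icc 0 1)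
      (fun t ht => (key t ht).1.continuousAt.continuousWithinAt)
      (fun t ht => (key t (interior_subset ht)).1.differentiableAt.differentiableWithinAt)
      (fun t ht => ?_)
    rw [(key t (interior_subset ht)).1.deriv]
    exact (key t (interior_subset ht)).2
  have := hmono (left_mem_Icc.2 zero_le_one) (right_mem_Icc.2 zero_le_one) zero_le_one
  simp at this
  linarith

lemma quad_lower (d : ℕ) (A : Matrix (Fin d) (Fin d) ℝ)
    (W : CellMat d → ℝ) (hPos : HessPosDef d A W) :
    ∃ q > 0, ∀ V : CellMat d, PerpTrans V →
      (∀ H : Matrix (Fin d) (Fin d) ℝ, H.transpose = -H →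
        frobInner V (rotCell H (Zmat d A)) = 0) → q * ‖V‖ ^ 2 ≤ Qcell d A W V := by
  have hQ : ∀ V, Qcell d A W V = fderiv ℝ (fderiv ℝ W) (Zmat d A) V V := fun V => by
    simp [Qcell, iteratedFDeriv_two_apply]
  have hQc : Continuous (Qcell d A W) := by
    rw [show Qcell d A W = fun V => fderiv ℝ (fderiv ℝ W) (Zmat d A) V V from funext hQ]
    fun_prop
  have hfc : ∀ H : CellMat d, Continuous fun V : CellMat d => frobInner V H := fun H => by
    unfold frobInner; fun_prop
  set K : Set (CellMat d) := {V | ‖V‖ = 1 ∧ PerpTrans V ∧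
      ∀ H : Matrix (Fin d) (Fin d) ℝ, H.transpose = -H →
        frobInner V (rotCell H (Zmat d A)) = 0} with hK
  have hKc : IsCompact K := by
    refine IsCompact.of_isClosed_subset (isCompact_closedBall (0 : CellMat d) 1) ?_ ?_
    · refine (isClosed_eq continuous_norm continuous_const).inter (IsClosed.inter ?_ ?_)
      · have : {V : CellMat d | PerpTrans V} = ⋂ j, {V | ∑ b, V j b = 0} := by
          ext V; simp [PerpTrans]
        change IsClosed {V : CellMat d | PerpTrans V}
        rw [this]
        exact isClosed_iInter fun j => isClosed_eq (by fun_prop) continuous_const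
      · have : {V : CellMat d | ∀ H : Matrix (Fin d) (Fin d) ℝ, H.transpose = -H →
            frobInner V (rotCell H (Zmat d A)) = 0} =
            ⋂ H : Matrix (Fin d) (Fin d) ℝ, ⋂ _ : H.transpose = -H,
              {V | frobInner V (rotCell H (Zmat d A)) = 0} := by
          ext V; simp
        change IsClosed {V : CellMat d | ∀ H : Matrix (Fin d) (Fin d) ℝ, H.transpose = -H →
            frobInner V (rotCell H (Zmat d A)) = 0}
        rw [this]
        exact isClosed_iInter fun H => isClosed_iInter fun _ =>
          isClosed_eq (hfc _) continuous_const
    · intro V hV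
      simp [hV.1]
  have hperp : ∀ V : CellMat d, PerpTrans V → ∀ c : Fin d → ℝ, frobInner V (transCell c) = 0 := by
    intro V hV c
    simp only [frobInner, transCell, ← Finset.sum_mul]
    exact Finset.sum_eq_zero fun j _ => by rw [hV j, zero_mul]
  have hex : ∃ q > 0, ∀ V ∈ K, q ≤ Qcell d A W V := by
    rcases K.eq_empty_or_nonempty with h | h
    · exact ⟨1, one_pos, by simp [h]⟩
    · obtain ⟨V0, hV0, hm⟩ := hKc.exists_isMinOn h hQc.continuousOn
      refine ⟨Qcell d A W V0, hPos V0 ?_ (hperp _ hV0.2.1) hV0.2.2, fun V hV => hm hV⟩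
      intro h0
      have := hV0.1
      simp [h0] at this
  obtain ⟨q, hq, hqK⟩ := hex
  refine ⟨q, hq, fun V hV hVH => ?_⟩
  rcases eq_or_ne V 0 with rfl | hne
  · simp [hQ]
  have hn : 0 < ‖V‖ := norm_pos_iff.2 hne
  have h := hqK (‖V‖⁻¹ • V) ⟨by rw [norm_smul, norm_inv, norm_norm, inv_mul_cancel₀ hn.ne'],
    fun j => by simp [← Finset.mul_sum, hV j], fun H hH => by
      have := hVH H hH
      simp only [frobInner, Pi.smul_apply, smul_eq_mul, mul_assoc, ← Finset.mul_sum] at this ⊢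
      rw [this, mul_zero]⟩
  rw [hQ] at h ⊢
  simp only [map_smul, ContinuousLinearMap.smul_apply, smul_eq_mul] at h
  have h' := mul_le_mul_of_nonneg_left h (sq_nonneg ‖V‖)
  have e : ‖V‖ ^ 2 * (‖V‖⁻¹ * (‖V‖⁻¹ * fderiv ℝ (fderiv ℝ W) (Zmat d A) V V)) =
    fderiv ℝ (fderiv ℝ W) (Zmat d A) V V := by field_simp
  rw [e] at h'
  linarith

lemma dist_le {d : ℕ} (A : Matrix (Fin d) (Fin d) ℝ) (G : CellMat d)
    (R : Matrix (Fin d) (Fin d) ℝ) (hR : IsSO R) :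
    distSObar d A G ^ 2 ≤ msq (G - rotCell R (Zmat d A)) := by
  have hb : ∀ t ∈ {t | ∃ H ∈ SObar d A, t = mnorm (G - H)}, (0 : ℝ) ≤ t := by
    rintro t ⟨H, _, rfl⟩
    exact mnorm_nonneg' _
  have h0 : 0 ≤ distSObar d A G := Real.sInf_nonneg hb
  have h1 : distSObar d A G ≤ mnorm (G - rotCell R (Zmat d A)) :=
    csInf_le ⟨0, hb⟩ ⟨_, ⟨R, hR, rfl⟩, rfl⟩
  rw [← mnorm_sq]
  gcongr

/-- For every `T > 0` there is `C > 0` with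
`dist²(G, SO̅(d)) ≤ C · W_cell(G)` for all `G ⊥ V₀` with `|G| ≤ T`. -/
theorem dist_sq_le_cell_energy
    (d : ℕ) (hd : 2 ≤ d) (A : Matrix (Fin d) (Fin d) ℝ) (hA : 0 < A.det)
    (W : CellMat d → ℝ) (hW0 : ∀ G, 0 ≤ W G)
    (hFrame : FrameIndiff d W) (hZero : MinimalOnSO d A W)
    (hSmooth : SmoothNearSO d A W) (hPos : HessPosDef d A W)
    (T : ℝ) (hT : 0 < T) :
    ∃ C > (0 : ℝ), ∀ G : CellMat d, PerpTrans G → mnorm G ≤ T →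
      distSObar d A G ^ 2 ≤ C * W G := by
  classical
  set Z := Zmat d A with hZ
  have hWZ : W Z = 0 := (hZero Z).2 ⟨1, isSO_one, 0, by
    rw [rotCell_one]; funext j b; simp [transCell, hZ]⟩
  have hrot : ∀ (R : Matrix (Fin d) (Fin d) ℝ) (G : CellMat d), IsSO R → W (rotCell R G) = W G := by
    intro R G hR
    have h := hFrame G R 0 hR
    have e : (transCell (0 : Fin d → ℝ) : CellMat d) = 0 := by funext j b; simp [transCell]
    rwa [e, add_zero] at h
  obtain ⟨hWc, U, hU, hSU, hCD⟩ := hSmooth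
  have hZU : Z ∈ U := hSU ⟨1, isSO_one, by rw [rotCell_one]⟩
  have hCDZ : ContDiffAt ℝ 2 W Z := hCD.contDiffAt (hU.mem_nhds hZU)
  have hloc : IsLocalMin W Z := Filter.Eventually.of_forall fun G => by rw [hWZ]; exact hW0 G
  obtain ⟨q, hq, hQ⟩ := quad_lower d A W hPos
  obtain ⟨δ, hδ, hTay⟩ := taylor_lower W Z hCDZ hloc (q / 2) (by positivity)
  have hRc : ∀ G : CellMat d, Continuous fun R : Matrix (Fin d) (Fin d) ℝ =>
      msq (G - rotCell R Z) := by
    intro G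
    refine msq_continuous.comp (continuous_const.sub ?_)
    unfold rotCell
    refine continuous_pi fun j => continuous_pi fun b => continuous_finsetSum _ fun i _ => ?_
    exact (continuous_id.matrix_elem j i).mul continuous_const
  set K : Set (CellMat d) := {G | PerpTrans G ∧ mnorm G ≤ T ∧
    ∀ R : Matrix (Fin d) (Fin d) ℝ, IsSO R → δ ^ 2 ≤ msq (G - rotCell R Z)} with hK
  have hKc : IsCompact K := by
    refine IsCompact.of_isClosed_subset (isCompact_closedBall (0 : CellMat d) T) ?_ ?_
    · have e : K = (⋂ j, {V : CellMat d | ∑ b, V j b = 0}) ∩ ({G | mnorm G ≤ T} ∩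
          ⋂ R : Matrix (Fin d) (Fin d) ℝ, ⋂ _ : IsSO R, {G | δ ^ 2 ≤ msq (G - rotCell R Z)}) := by
        ext V; simp [hK, PerpTrans]
      rw [e]
      refine IsClosed.inter (isClosed_iInter fun j => isClosed_eq (by fun_prop) continuous_const)
        ((isClosed_le mnorm_continuous continuous_const).inter
          (isClosed_iInter fun R => isClosed_iInter fun _ => isClosed_le continuous_const
            (msq_continuous.comp (continuous_id.sub continuous_const))))
    · intro G hG
      simpa using (norm_le_mnorm G).trans hG.2.1
  have hKpos : ∀ G ∈ K, 0 < W G := by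
    intro G hG
    refine lt_of_le_of_ne (hW0 G) fun h0 => ?_
    obtain ⟨R, hR, c, hc⟩ := (hZero G).1 h0.symm
    have hRZ : PerpTrans (rotCell R Z) := perp_rot R (perp_Z A)
    have e : G - rotCell R Z = 0 := by
      funext j b
      have h1 := perp_sub hG.1 hRZ j
      have h2 : ∀ b, (G - rotCell R Z) j b = c j := fun b => by
        rw [hc, ← hZ, add_sub_cancel_left]; rfl
      rw [Finset.sum_congr rfl fun b _ => h2 b] at h1
      rw [h2]
      simpa using h1
    have h3 := hG.2.2 R hR
    rw [e] at h3
    have h4 : msq (0 : CellMat d) = 0 := by simp [msq]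
    rw [h4] at h3
    have : 0 < δ ^ 2 := by positivity
    linarith
  have hfar : ∃ C > 0, ∀ G ∈ K, msq (G - Z) ≤ C * W G := by
    rcases K.eq_empty_or_nonempty with h | h
    · exact ⟨1, one_pos, by simp [h]⟩
    · obtain ⟨G0, hG0, hm⟩ := hKc.exists_isMinOn h hWc.continuousOn
      obtain ⟨G1, hG1, hM⟩ := hKc.exists_isMaxOn h
        (f := fun G => msq (G - Z)) (msq_continuous.comp (continuous_id.sub continuous_const)).continuousOn
      have hp := hKpos G0 hG0
      have hn := msq_nonneg (G1 - Z)
      refine ⟨(msq (G1 - Z) + 1) / W G0, by positivity, fun G hG => ?_⟩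
      have h1 : msq (G - Z) ≤ msq (G1 - Z) := hM hG
      have h2 : W G0 ≤ W G := hm hG
      calc msq (G - Z) ≤ (msq (G1 - Z) + 1) / W G0 * W G0 := by
            rw [div_mul_cancel₀ _ hp.ne']; linarith
        _ ≤ _ := by gcongr
  obtain ⟨C1, hC1, hfar⟩ := hfar
  set N : ℝ := (d : ℝ) * 2 ^ d with hN
  have hNpos : 0 < N := by
    have : (0 : ℝ) < d := by exact_mod_cast (by omega : 0 < d)
    positivity
  refine ⟨C1 + 4 * N / q, by positivity, fun G hG hGT => ?_⟩
  have hWG := hW0 G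
  obtain ⟨R, hR, hRmin⟩ := isCompact_SO.exists_isMinOn ⟨1, isSO_one⟩ (hRc G).continuousOn
  have hRmin' : ∀ S : Matrix (Fin d) (Fin d) ℝ, IsSO S →
      msq (G - rotCell R Z) ≤ msq (G - rotCell S Z) := fun S hS => hRmin hS
  by_cases hcase : δ ^ 2 ≤ msq (G - rotCell R Z)
  · have hGK : G ∈ K := ⟨hG, hGT, fun S hS => hcase.trans (hRmin' S hS)⟩
    have h1 := dist_le A G 1 isSO_one
    rw [rotCell_one] at h1
    have h2 := hfar G hGK
    have h3 : 0 ≤ 4 * N / q * W G := by positivity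
    rw [add_mul]
    exact h1.trans (h2.trans (by linarith))
  · push Not at hcase
    have hRt : IsSO R.transpose := IsSO.tr hR
    set G' := rotCell R.transpose G with hG'
    have hback : ∀ S : Matrix (Fin d) (Fin d) ℝ,
        msq (G' - rotCell S Z) = msq (G - rotCell (R * S) Z) := by
      intro S
      rw [← msq_rotCell R hR.1, rotCell_sub, hG', ← rotCell_mul, ← rotCell_mul,
        mul_eq_one_comm.1 hR.1, rotCell_one]
    have hVeq : msq (G' - Z) = msq (G - rotCell R Z) := by
      have := hback 1
      rwa [rotCell_one, mul_one] at this
    have hopt := optimality G' Z (fun S hS => by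
      rw [hVeq, hback S]; exact hRmin' _ (hR.mul hS))
    have hVperp : PerpTrans (G' - Z) := perp_sub (perp_rot _ hG) (perp_Z A)
    have hVn : ‖G' - Z‖ < δ := by
      refine (norm_le_mnorm _).trans_lt (lt_of_pow_lt_pow_left₀ 2 hδ.le ?_)
      rw [mnorm_sq, hVeq]; exact hcase
    have ht := hTay (G' - Z) hVn
    have hq2 : q * ‖G' - Z‖ ^ 2 ≤ iteratedFDeriv ℝ 2 W Z ![G' - Z, G' - Z] :=
      hQ (G' - Z) hVperp hopt
    rw [hWZ, add_sub_cancel, hrot _ _ hRt] at ht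
    have hlow : q / 4 * ‖G' - Z‖ ^ 2 ≤ W G := by nlinarith
    have h1 := dist_le A G R hR
    rw [← hZ, ← hVeq] at h1
    have h2 := msq_le_norm (G' - Z)
    have h3 : N * ‖G' - Z‖ ^ 2 ≤ 4 * N / q * W G := by
      calc N * ‖G' - Z‖ ^ 2 = 4 * N / q * (q / 4 * ‖G' - Z‖ ^ 2) := by field_simp
        _ ≤ _ := by gcongr
    have h4 : 0 ≤ C1 * W G := by positivity
    rw [add_mul]
    linarith

end Cleavage
end
end

section
/- Under Assumptions (i)–(iv) on the cell energy, the energy is bounded away from zero for large centered arguments: there exist c > 0 and R > 0 such that W_cell(G) ≥ c for every G ∈ ℝ^{d×2^d} with G ⊥ V₀ (columns summing to zero) and |G| ≥ R; in particular liminf_{|G|→∞, G⊥V₀} W_cell(G) > 0. -/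
open scoped BigOperators ENNReal Pointwise
open MeasureTheory Filter Set

attribute [local instance] Classical.propDecidable

noncomputable section

namespace Cleavage

/-- A finite family of reals with large range has a large gap. -/
theorem exists_gap {α : Type*} [Fintype α] [DecidableEq α] (f : α → ℝ) (M : ℝ) (hM : 0 < M)
    (a b : α) (h : f a + ((Fintype.card α : ℝ) + 1) * M ≤ f b) :
    ∃ S : Finset α, a ∈ S ∧ b ∉ S ∧ ∀ s ∈ S, ∀ t, t ∉ S → f s + M ≤ f t := by
  by_contra hcon
  push Not at hcon
  have key : ∀ k : ℕ, k ≤ Fintype.card α + 1 →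
      k ≤ (Finset.univ.filter fun x => f x < f a + k * M).card := by
    intro k
    induction k with
    | zero => intro _; exact Nat.zero_le _
    | succ k ih =>
      intro hk
      have ih' := ih (by omega)
      refine Nat.succ_le_of_lt (lt_of_le_of_lt ih' (Finset.card_lt_card ?_))
      have hsub : (Finset.univ.filter fun x => f x < f a + k * M) ⊆
          (Finset.univ.filter fun x => f x < f a + (k + 1 : ℕ) * M) := by
        intro x hx
        simp only [Finset.mem_filter, Finset.mem_univ, true_and] at hx ⊢
        push_cast
        nlinarith
      refine Finset.ssubset_iff_subset_ne.mpr ⟨hsub, fun heq => ?_⟩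
      obtain ⟨s, hs, t, ht, hst⟩ := hcon (Finset.univ.filter fun x => f x < f a + (k + 1 : ℕ) * M)
        (by
          simp only [Finset.mem_filter, Finset.mem_univ, true_and]
          push_cast
          have : (0 : ℝ) ≤ k := Nat.cast_nonneg k
          nlinarith)
        (by
          simp only [Finset.mem_filter, Finset.mem_univ, true_and, not_lt]
          have : ((k + 1 : ℕ) : ℝ) ≤ (Fintype.card α : ℝ) + 1 := by exact_mod_cast hk
          nlinarith)
      rw [← heq] at hs
      simp only [Finset.mem_filter, Finset.mem_univ, true_and, not_lt] at hs ht
      push_cast at ht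
      linarith
  have h1 := key (Fintype.card α + 1) le_rfl
  have h2 := Finset.card_le_univ
    (Finset.univ.filter fun x => f x < f a + (Fintype.card α + 1 : ℕ) * M)
  omega

theorem abs_le_eunorm {n : ℕ} (v : Fin n → ℝ) (j : Fin n) : |v j| ≤ eunorm v := by
  unfold eunorm
  apply Real.abs_le_sqrt
  exact Finset.single_le_sum (f := fun i => v i ^ 2) (fun i _ => sq_nonneg (v i))
    (Finset.mem_univ j)

theorem two_block_bound {d : ℕ} (A : Matrix (Fin d) (Fin d) ℝ) (W : CellMat d → ℝ)
    (β : (Fin d → Bool) → (Fin d → Bool) → ℝ)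
    (hDecomp : PairDecomposition d A W β) (hCross : CrossPos d β)
    (S : Finset (Fin d → Bool)) :
    ∃ c > (0 : ℝ), ∃ M : ℝ, ∀ G : CellMat d, S.Nonempty → Sᶜ.Nonempty →
      (∀ s ∈ S, ∀ t, t ∉ S → M ≤ eunorm (fun jj => G jj s - G jj t)) → c ≤ W G := by
  by_cases hS : S.Nonempty ∧ Sᶜ.Nonempty
  swap
  · exact ⟨1, one_pos, 0, fun G h1 h2 => absurd ⟨h1, h2⟩ hS⟩
  have hP : IsCellPartition (![S, Sᶜ] : Fin 2 → Finset (Fin d → Bool)) := by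
    refine ⟨?_, ?_, ?_⟩
    · intro i
      fin_cases i
      · exact hS.1
      · exact hS.2
    · intro i j hij
      fin_cases i <;> fin_cases j
      · exact absurd rfl hij
      · exact disjoint_compl_right
      · exact disjoint_compl_left
      · exact absurd rfl hij
    · ext x
      simp only [Finset.mem_biUnion, Finset.mem_univ, true_and, iff_true]
      by_cases hx : x ∈ S
      · exact ⟨0, hx⟩
      · exact ⟨1, Finset.mem_compl.mpr hx⟩
  have hc := hCross 2 le_rfl _ hP
  obtain ⟨Wc, hWc, hlim, -⟩ := hDecomp 2 le_rfl _ hP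
  obtain ⟨M, hM⟩ := hlim (crossSum β ![S, Sᶜ] / 2) (by linarith)
  refine ⟨crossSum β ![S, Sᶜ] / 2, by linarith, M, fun G _ _ hG => ?_⟩
  have hsep : Separated M ![S, Sᶜ] G := by
    intro i j hij s hs t ht
    fin_cases i <;> fin_cases j
    · exact absurd rfl hij
    · exact hG s hs t (Finset.mem_compl.mp ht)
    · have := hG t ht s (Finset.mem_compl.mp hs)
      have he : eunorm (fun jj => G jj s - G jj t) = eunorm (fun jj => G jj t - G jj s) := by
        unfold eunorm
        congr 1
        exact Finset.sum_congr rfl fun i _ => by ring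
      rw [he]; exact this
    · exact absurd rfl hij
  have h1 := (abs_le.mp (hM G hsep)).1
  have h2 : 0 ≤ ∑ i, Wc i (restrictCols ![S, Sᶜ] G i) :=
    Finset.sum_nonneg fun i _ => hWc i _
  linarith

/-- Under Assumptions (i)–(iv), the cell energy is bounded away from zero
for large centered arguments. -/
theorem cell_energy_bounded_below_for_large_arguments
    (d : ℕ) (hd : 2 ≤ d) (A : Matrix (Fin d) (Fin d) ℝ) (hA : 0 < A.det)
    (W : CellMat d → ℝ) (hW0 : ∀ G, 0 ≤ W G)
    (hFrame : FrameIndiff d W) (hZero : MinimalOnSO d A W)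
    (hSmooth : SmoothNearSO d A W) (hPos : HessPosDef d A W)
    (β : (Fin d → Bool) → (Fin d → Bool) → ℝ)
    (hβsym : ∀ s t, β s t = β t s) (hβnn : ∀ s t, 0 ≤ β s t)
    (hDecomp : PairDecomposition d A W β) (hCross : CrossPos d β) :
    ∃ c > (0 : ℝ), ∃ R > (0 : ℝ), ∀ G : CellMat d, PerpTrans G → R ≤ mnorm G → c ≤ W G := by
  choose c hc M hM using two_block_bound A W β hDecomp hCross
  obtain ⟨S₀, -, hS₀⟩ := Finset.exists_min_image (Finset.univ : Finset (Finset (Fin d → Bool))) c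
    Finset.univ_nonempty
  obtain ⟨S₁, -, hS₁⟩ := Finset.exists_max_image (Finset.univ : Finset (Finset (Fin d → Bool))) M
    Finset.univ_nonempty
  have hL : 0 < max (M S₁) 1 := lt_of_lt_of_le one_pos (le_max_right _ _)
  have hML : ∀ S, M S ≤ max (M S₁) 1 := fun S =>
    (hS₁ S (Finset.mem_univ S)).trans (le_max_left _ _)
  generalize max (M S₁) 1 = L at hL hML
  set K : ℝ := ((Fintype.card (Fin d → Bool) : ℝ) + 1) * L with hK
  have hKpos : 0 < K := by positivity
  refine ⟨c S₀, hc S₀, Real.sqrt (∑ _j : Fin d, ∑ _b : Fin d → Bool, K ^ 2) + 1,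
    by positivity, fun G hG hR => ?_⟩
  have hbig : ∃ j b, K < |G j b| := by
    by_contra hcon
    push Not at hcon
    have : mnorm G ≤ Real.sqrt (∑ _j : Fin d, ∑ _b : Fin d → Bool, K ^ 2) := by
      unfold mnorm
      apply Real.sqrt_le_sqrt
      refine Finset.sum_le_sum fun j _ => Finset.sum_le_sum fun b _ => ?_
      rw [← sq_abs]
      exact pow_le_pow_left₀ (abs_nonneg _) (hcon j b) 2
    linarith
  obtain ⟨j, b, hjb⟩ := hbig
  have hpair : ∃ p q, G j p + K ≤ G j q := by
    rcases lt_abs.mp hjb with h | h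
    · obtain ⟨p, -, hp⟩ := Finset.exists_le_of_sum_le (s := Finset.univ) (f := G j)
        (g := fun _ => (0 : ℝ)) Finset.univ_nonempty (by simp [hG j])
      exact ⟨p, b, by linarith⟩
    · obtain ⟨q, -, hq⟩ := Finset.exists_le_of_sum_le (s := Finset.univ) (g := G j)
        (f := fun _ => (0 : ℝ)) Finset.univ_nonempty (by simp [hG j])
      exact ⟨b, q, by linarith⟩
  obtain ⟨p, q, hpq⟩ := hpair
  obtain ⟨S, hpS, hqS, hgap⟩ := exists_gap (G j) L hL p q (by rw [← hK]; exact hpq)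
  refine (hS₀ S (Finset.mem_univ S)).trans (hM S G ⟨p, hpS⟩ ⟨q, Finset.mem_compl.mpr hqS⟩ ?_)
  intro s hs t ht
  have h1 := hgap s hs t ht
  have h2 := abs_le_eunorm (fun jj => G jj s - G jj t) j
  have h3 := neg_abs_le (G j s - G j t)
  have h4 := hML S
  linarith

end Cleavage
end
end

section
/- Norm equivalence for the piecewise affine interpolation: for every 1 ≤ p < ∞ there are constants c, C > 0 (depending only on p, d and A) such that for every intact cell Q = Q_ε(x̄) one has (i) c · dist^p(∇̄y|_Q, SO̅(d)) ≤ (1/|Q|)∫_Q dist^p(∇ỹ, SO(d)) ≤ C · dist^p(∇̄y|_Q, SO̅(d)) and (ii) c · |∇̄y|_Q|^p ≤ (1/|Q|)∫_Q |∇ỹ|^p ≤ C · |∇̄y|_Q|^p. -/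
open scoped BigOperators ENNReal Pointwise
open MeasureTheory Filter Set

attribute [local instance] Classical.propDecidable

noncomputable section

namespace Cleavage

/-- average of `f` over the face obtained by freezing the coordinates in `S` to `s`. -/
def avgf {n : ℕ} (f : (Fin n → Bool) → ℝ) (S : Fin n → Prop) (s : Fin n → Bool) : ℝ :=
  (∑ b : Fin n → Bool, f (fun i => if S i then s i else b i)) / 2 ^ n

def sg {n : ℕ} (x : Fin n → ℝ) : Fin n → Bool := fun i => if (1 : ℝ) / 2 < x i then true else false

lemma avgf_insert {n : ℕ} (f : (Fin (n + 1) → Bool) → ℝ) (S : Fin (n + 1) → Prop)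
    (s : Fin (n + 1) → Bool) (i0 : Fin (n + 1)) (h : S i0) :
    avgf f S s = avgf (fun bb => f (i0.insertNth (s i0) bb)) (fun j => S (i0.succAbove j))
      (fun j => s (i0.succAbove j)) := by
  unfold avgf
  have key : ∀ (β : Bool) (bb : Fin n → Bool),
      (fun i => if S i then s i else (Fin.insertNthEquiv (fun _ => Bool) i0 (β, bb)) i) =
      (i0.insertNth (s i0) (fun j => if S (i0.succAbove j) then s (i0.succAbove j) else bb j) :
        Fin (n + 1) → Bool) := by
    intro β bb
    funext i
    refine Fin.succAboveCases i0 ?_ (fun j => ?_) i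
    · simp [h]
    · simp
  rw [← (Fin.insertNthEquiv (fun _ => Bool) i0).sum_comp, Fintype.sum_prod_type]
  simp only [key]
  simp only [Fintype.sum_bool]
  rw [pow_succ]
  field_simp
  ring

lemma avgf_congr {n : ℕ} (f : (Fin n → Bool) → ℝ) {S S' : Fin n → Prop} {s s' : Fin n → Bool}
    (h : ∀ i, S i ↔ S' i) (hs : ∀ i, S i → s i = s' i) : avgf f S s = avgf f S' s' := by
  unfold avgf
  congr 1
  refine Finset.sum_congr rfl fun b _ => ?_
  congr 1
  funext i
  by_cases hi : S i
  · simp [hi, (h i).1 hi, hs i hi]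
  · have : ¬ S' i := fun h' => hi ((h i).2 h')
    simp [hi, this]

theorem cubeInterp_eval : ∀ (n : ℕ) (f : (Fin n → Bool) → ℝ) (x : Fin n → ℝ),
    Function.Injective (fun i => |x i - 1 / 2|) → (∀ i, x i ≠ 1 / 2) →
    cubeInterp n f x = avgf f (fun _ => False) (sg x) +
      ∑ i, 2 * |x i - 1 / 2| * (avgf f (fun j => |x i - 1 / 2| ≤ |x j - 1 / 2|) (sg x) -
        avgf f (fun j => |x i - 1 / 2| < |x j - 1 / 2|) (sg x))
  | 0, f, x, _, _ => by
      simp [cubeInterp, avgf]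
      exact congrArg f (Subsingleton.elim _ _)
  | n + 1, f, x, hinj, hne => by
      rw [cubeInterp]
      have h : ∃ i : Fin (n + 1), ∀ j : Fin (n + 1), |x j - 1 / 2| ≤ |x i - 1 / 2| :=
        Finite.exists_max fun i => |x i - 1 / 2|
      have hi0 := Classical.choose_spec h
      generalize Classical.choose h = i0 at hi0 ⊢
      have hpos : ∀ i, 0 < |x i - 1 / 2| := fun i => abs_pos.2 (sub_ne_zero.2 (hne i))
      have htpos : 0 < 2 * |x i0 - 1 / 2| := by have := hpos i0; positivity
      rw [if_neg htpos.ne']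
      set t := 2 * |x i0 - 1 / 2| with ht
      have habs : ∀ j, |(1 / 2 + (x (i0.succAbove j) - 1 / 2) / t) - 1 / 2| =
          |x (i0.succAbove j) - 1 / 2| / t := by
        intro j
        rw [add_sub_cancel_left, abs_div, abs_of_pos htpos]
      have hsg : sg (fun j => 1 / 2 + (x (i0.succAbove j) - 1 / 2) / t) =
          fun j => sg x (i0.succAbove j) := by
        funext j
        unfold sg
        have : (1 : ℝ) / 2 < 1 / 2 + (x (i0.succAbove j) - 1 / 2) / t ↔
            1 / 2 < x (i0.succAbove j) := by
          rw [lt_add_iff_pos_right, div_pos_iff_of_pos_right htpos, sub_pos]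
        simp only [this]
      rw [cubeInterp_eval n _ _ ?_ ?_]
      · rw [hsg]
        simp only [habs, div_le_div_iff_of_pos_right htpos, div_lt_div_iff_of_pos_right htpos]
        rw [Fin.sum_univ_succAbove _ i0]
        have hsi : (if (1 : ℝ) / 2 < x i0 then true else false) = sg x i0 := rfl
        rw [hsi]
        have hlt : ∀ j, |x (i0.succAbove j) - 1 / 2| < |x i0 - 1 / 2| := by
          intro j
          refine lt_of_le_of_ne (hi0 _) fun h' => ?_
          exact Fin.succAbove_ne i0 j (hinj h')
        have e1 : avgf f (fun j => |x i0 - 1 / 2| ≤ |x j - 1 / 2|) (sg x) =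
            avgf (fun bb => f (i0.insertNth (sg x i0) bb)) (fun _ => False)
              (fun j => sg x (i0.succAbove j)) := by
          rw [avgf_insert f (fun j => |x i0 - 1 / 2| ≤ |x j - 1 / 2|) _ i0 le_rfl]
          refine avgf_congr _ (fun j => ?_) (fun _ _ => rfl)
          simp only [iff_false, not_le]; exact hlt j
        have e2 : avgf f (fun j => |x i0 - 1 / 2| < |x j - 1 / 2|) (sg x) =
            avgf f (fun _ => False) (sg x) := by
          refine avgf_congr _ (fun j => ?_) (fun _ _ => rfl)
          simp only [iff_false, not_lt]; exact hi0 j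
        have e3 : (∑ b : Fin (n + 1) → Bool, f b) / 2 ^ (n + 1) = avgf f (fun _ => False) (sg x) := by
          simp [avgf]
        have e4 : ∀ j, avgf f (fun j' => |x (i0.succAbove j) - 1 / 2| ≤ |x j' - 1 / 2|) (sg x) =
            avgf (fun bb => f (i0.insertNth (sg x i0) bb))
              (fun j' => |x (i0.succAbove j) - 1 / 2| ≤ |x (i0.succAbove j') - 1 / 2|)
              (fun j => sg x (i0.succAbove j)) := fun j => avgf_insert f _ _ i0 (hi0 _)
        have e5 : ∀ j, avgf f (fun j' => |x (i0.succAbove j) - 1 / 2| < |x j' - 1 / 2|) (sg x) =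
            avgf (fun bb => f (i0.insertNth (sg x i0) bb))
              (fun j' => |x (i0.succAbove j) - 1 / 2| < |x (i0.succAbove j') - 1 / 2|)
              (fun j => sg x (i0.succAbove j)) := fun j => avgf_insert f _ _ i0 (hlt _)
        simp only [e4, e5]
        rw [e1, e2, e3, ← ht, mul_add, Finset.mul_sum]
        have e6 : ∀ (a D : ℝ), t * (2 * (a / t) * D) = 2 * a * D := by
          intro a D; field_simp
        simp only [e6]
        ring
      · intro j j' hjj
        simp only [habs] at hjj
        have h2 : |x (i0.succAbove j) - 1 / 2| = |x (i0.succAbove j') - 1 / 2| := by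
          exact (div_left_inj' htpos.ne').1 hjj
        exact Fin.succAbove_right_injective (hinj h2)
      · intro j hj
        have h1 := habs j
        rw [hj, sub_self, abs_zero] at h1
        have := div_pos (hpos (i0.succAbove j)) htpos
        linarith

/-- sign of a bit -/
def bs (b : Bool) : ℝ := if b then 1 else -1

lemma bs_mul_self (b : Bool) : bs b * bs b = 1 := by cases b <;> simp [bs]
lemma abs_bs (b : Bool) : |bs b| = 1 := by cases b <;> simp [bs]
lemma bs_ne_zero (b : Bool) : bs b ≠ 0 := by cases b <;> simp [bs]
lemma cornerVec_eq {d : ℕ} (b : Fin d → Bool) (i : Fin d) : cornerVec b i = bs (b i) / 2 := by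
  unfold cornerVec bs
  cases b i <;> norm_num

lemma avgf_sub {n : ℕ} (f g : (Fin n → Bool) → ℝ) (S : Fin n → Prop) (s : Fin n → Bool) :
    avgf (f - g) S s = avgf f S s - avgf g S s := by
  simp [avgf, Finset.sum_sub_distrib, sub_div]

lemma avgf_abs_le {n : ℕ} (f : (Fin n → Bool) → ℝ) (S : Fin n → Prop) (s : Fin n → Bool)
    (a : ℝ) (h : ∀ b, |f b| ≤ a) : |avgf f S s| ≤ a := by
  unfold avgf
  rw [abs_div, abs_of_pos (by positivity : (0 : ℝ) < 2 ^ n), div_le_iff₀ (by positivity)]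
  refine (Finset.abs_sum_le_sum_abs _ _).trans ?_
  refine (Finset.sum_le_sum (fun b _ => h _)).trans ?_
  simp [mul_comm]

lemma sum_cornerVec {d : ℕ} (i : Fin d) : ∑ b : Fin d → Bool, cornerVec b i = 0 := by
  have hinv : Function.Involutive (fun b : Fin d → Bool => fun j => !(b j)) := by
    intro b; funext j; simp
  have h1 := Equiv.sum_comp (hinv.toPerm _) (fun b : Fin d → Bool => cornerVec b i)
  have h2 : ∀ b : Fin d → Bool, cornerVec (hinv.toPerm _ b) i = - cornerVec b i := by
    intro b
    simp only [cornerVec_eq, Function.Involutive.coe_toPerm]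
    cases b i <;> norm_num [bs]
  simp only [h2, Finset.sum_neg_distrib] at h1
  linarith

lemma avgf_lin {d : ℕ} (w : Fin d → ℝ) (S : Fin d → Prop) (s : Fin d → Bool) :
    avgf (fun b => ∑ l, w l * cornerVec b l) S s = ∑ l, if S l then w l * cornerVec s l else 0 := by
  unfold avgf
  rw [Finset.sum_comm, Finset.sum_div]
  refine Finset.sum_congr rfl fun l _ => ?_
  by_cases h : S l
  · simp only [if_pos h]
    have : ∀ b : Fin d → Bool, cornerVec (fun i => if S i then s i else b i) l = cornerVec s l := by
      intro b; simp [cornerVec, h]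
    simp only [this]
    simp
  · rw [if_neg h, ← Finset.mul_sum]
    have : ∀ b : Fin d → Bool, cornerVec (fun i => if S i then s i else b i) l = cornerVec b l := by
      intro b; simp [cornerVec, h]
    simp only [this, sum_cornerVec]; simp

/-- gradient on the sector `(τ,s)` in reference coordinates. -/
def Lmat {d : ℕ} (τ : Equiv.Perm (Fin d)) (s : Fin d → Bool) (G : CellMat d) :
    Matrix (Fin d) (Fin d) ℝ := fun j i =>
  2 * bs (s i) * (avgf (G j) (fun l => (τ l : ℕ) < τ i + 1) s - avgf (G j) (fun l => (τ l : ℕ) < τ i) s)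

lemma Lmat_sub {d : ℕ} (τ : Equiv.Perm (Fin d)) (s : Fin d → Bool) (G H : CellMat d) :
    Lmat τ s (G - H) = Lmat τ s G - Lmat τ s H := by
  ext j i
  simp only [Lmat, Pi.sub_apply, avgf_sub, Matrix.sub_apply]
  ring

lemma Lmat_bound {d : ℕ} (τ : Equiv.Perm (Fin d)) (s : Fin d → Bool) (G : CellMat d) (a : ℝ)
    (h : ∀ j b, |G j b| ≤ a) (j i : Fin d) : |Lmat τ s G j i| ≤ 4 * a := by
  unfold Lmat
  rw [abs_mul, abs_mul, abs_bs]
  have h1 := avgf_abs_le (G j) (fun l => (τ l : ℕ) < τ i + 1) s a (h j)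
  have h2 := avgf_abs_le (G j) (fun l => (τ l : ℕ) < τ i) s a (h j)
  have h3 := abs_sub (avgf (G j) (fun l => (τ l : ℕ) < τ i + 1) s) (avgf (G j) (fun l => (τ l : ℕ) < τ i) s)
  rw [abs_of_pos (by norm_num : (0 : ℝ) < 2)]
  linarith

lemma rotCell_Z {d : ℕ} (A R : Matrix (Fin d) (Fin d) ℝ) (j : Fin d) :
    rotCell R (Zmat d A) j = fun b => ∑ l, (R * A) j l * cornerVec b l := by
  funext b
  have : rotCell R (Zmat d A) j b = (R.mulVec (A.mulVec (cornerVec b))) j := rfl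
  rw [this, Matrix.mulVec_mulVec]; rfl

lemma Lmat_Z {d : ℕ} (τ : Equiv.Perm (Fin d)) (s : Fin d → Bool) (A R : Matrix (Fin d) (Fin d) ℝ) :
    Lmat τ s (rotCell R (Zmat d A)) = R * A := by
  ext j i
  unfold Lmat
  rw [rotCell_Z, avgf_lin, avgf_lin, ← Finset.sum_sub_distrib, Finset.sum_eq_single i]
  · rw [if_pos (by omega), if_neg (by omega), cornerVec_eq]
    have := bs_mul_self (s i)
    linear_combination ((R * A) j i) * this
  · intro l _ hl
    have : (τ l : ℕ) ≠ τ i := fun h => hl (τ.injective (Fin.ext h))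
    by_cases h : (τ l : ℕ) < τ i
    · rw [if_pos (by omega), if_pos h, sub_self]
    · rw [if_neg (by omega), if_neg h, sub_self]
  · simp

lemma Lmat_corner {d : ℕ} (s : Fin d → Bool) (G : CellMat d) (hG : PerpTrans G) (j : Fin d) :
    ∑ i, Lmat 1 s G j i * cornerVec s i = G j s := by
  have h1 : ∀ i : Fin d, Lmat 1 s G j i * cornerVec s i =
      (fun k : ℕ => avgf (G j) (fun l => (l : ℕ) < k + 1) s - avgf (G j) (fun l => (l : ℕ) < k) s) i := by
    intro i
    simp only [Lmat, cornerVec_eq, Equiv.Perm.one_apply]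
    linear_combination (avgf (G j) (fun l => (l : ℕ) < i + 1) s -
      avgf (G j) (fun l => (l : ℕ) < i) s) * bs_mul_self (s i)
  simp only [h1]
  rw [Fin.sum_univ_eq_sum_range (fun k : ℕ => avgf (G j) (fun l => (l : ℕ) < k + 1) s - avgf (G j) (fun l => (l : ℕ) < k) s),
    Finset.sum_range_sub (fun k : ℕ => avgf (G j) (fun l => (l : ℕ) < k) s)]
  simp [avgf, hG j]

lemma swap_lt {n : ℕ} (m : Fin n) (x : Fin (n + 1)) (k : ℕ) (hk : k ≠ (m : ℕ) + 1) :
    ((Equiv.swap m.castSucc m.succ x : Fin (n + 1)) : ℕ) < k ↔ (x : ℕ) < k := by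
  rw [Equiv.swap_apply_def]
  split_ifs with h1 h2
  · subst h1; simp; omega
  · subst h2; simp; omega
  · rfl

lemma Lmat_swap {n : ℕ} (τ : Equiv.Perm (Fin (n + 1))) (s : Fin (n + 1) → Bool) (m : Fin n) :
    ∃ v : Fin (n + 1) → ℝ, v ≠ 0 ∧ ∀ G : CellMat (n + 1), ∃ a : Fin (n + 1) → ℝ,
      Lmat τ s G - Lmat (Equiv.swap m.castSucc m.succ * τ) s G = Matrix.vecMulVec a v := by
  set τ' := Equiv.swap m.castSucc m.succ * τ with hτ'
  set i1 := τ.symm m.castSucc with hi1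
  set i2 := τ.symm m.succ with hi2
  have t1 : τ i1 = m.castSucc := by simp [hi1]
  have t2 : τ i2 = m.succ := by simp [hi2]
  have t1' : τ' i1 = m.succ := by simp [hτ', t1]
  have t2' : τ' i2 = m.castSucc := by simp [hτ', t2]
  have h12 : i1 ≠ i2 := by
    intro h; rw [h, t2] at t1
    have := congrArg Fin.val t1; simp at this
  have hH : ∀ (G : CellMat (n + 1)) j (k : ℕ), k ≠ (m : ℕ) + 1 →
      avgf (G j) (fun l => (τ' l : ℕ) < k) s = avgf (G j) (fun l => (τ l : ℕ) < k) s := by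
    intro G j k hk
    exact avgf_congr _ (fun l => swap_lt m (τ l) k hk) fun _ _ => rfl
  refine ⟨fun i => if i = i1 then bs (s i1) else if i = i2 then - bs (s i2) else 0, ?_, ?_⟩
  · intro h
    have := congrFun h i1
    simp [bs_ne_zero] at this
  · intro G
    refine ⟨fun j => 2 * ((avgf (G j) (fun l => (τ l : ℕ) < m + 1) s -
      avgf (G j) (fun l => (τ l : ℕ) < m) s) - (avgf (G j) (fun l => (τ l : ℕ) < m + 1 + 1) s -
      avgf (G j) (fun l => (τ' l : ℕ) < m + 1) s)), ?_⟩
    ext j i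
    rw [Matrix.sub_apply, Matrix.vecMulVec_apply]
    unfold Lmat
    by_cases h1 : i = i1
    · subst h1
      rw [t1, t1', if_pos rfl]
      simp only [Fin.val_succ, Fin.val_castSucc]
      rw [hH G j (m + 1 + 1) (by omega)]
      ring
    · by_cases h2 : i = i2
      · subst h2
        rw [t2, t2', if_neg h1, if_pos rfl]
        simp only [Fin.val_succ, Fin.val_castSucc]
        rw [hH G j m (by omega)]
        ring
      · rw [if_neg h1, if_neg h2]
        have n1 : τ i ≠ m.castSucc := fun h => h1 (by rw [hi1, ← h]; simp)
        have n2 : τ i ≠ m.succ := fun h => h2 (by rw [hi2, ← h]; simp)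
        have e : τ' i = τ i := by
          simp only [hτ', Equiv.Perm.mul_apply]
          exact Equiv.swap_apply_of_ne_of_ne n1 n2
        have n1' : (τ i : ℕ) ≠ m := fun h => n1 (Fin.ext h)
        have n2' : (τ i : ℕ) ≠ m + 1 := fun h => n2 (Fin.ext h)
        rw [e, hH G j _ n2', hH G j _ (by omega)]
        ring

lemma Lmat_flip {n : ℕ} (τ : Equiv.Perm (Fin (n + 1))) (s : Fin (n + 1) → Bool) (i0 : Fin (n + 1))
    (hi : τ i0 = Fin.last n) (c : Bool) :
    ∃ v : Fin (n + 1) → ℝ, v ≠ 0 ∧ ∀ G : CellMat (n + 1), ∃ a : Fin (n + 1) → ℝ,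
      Lmat τ s G - Lmat τ (Function.update s i0 c) G = Matrix.vecMulVec a v := by
  refine ⟨Pi.single i0 1, by simp, fun G => ⟨fun j => (Lmat τ s G - Lmat τ (Function.update s i0 c) G) j i0, ?_⟩⟩
  ext j i
  rw [Matrix.vecMulVec_apply]
  by_cases h : i = i0
  · subst h; simp
  · rw [Pi.single_eq_of_ne h, mul_zero, Matrix.sub_apply]
    have hlt : (τ i : ℕ) < n := by
      have h1 : τ i ≠ Fin.last n := fun h' => h (τ.injective (h'.trans hi.symm))
      have h2 := (τ i).isLt
      have h3 : (τ i : ℕ) ≠ n := fun h' => h1 (Fin.ext h')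
      omega
    have hl : (τ i0 : ℕ) = n := by rw [hi]; rfl
    have key : ∀ k : ℕ, k ≤ n → avgf (G j) (fun l => (τ l : ℕ) < k) (Function.update s i0 c) =
        avgf (G j) (fun l => (τ l : ℕ) < k) s := by
      intro k hk
      refine avgf_congr _ (fun _ => Iff.rfl) fun l hlk => ?_
      have : l ≠ i0 := by rintro rfl; omega
      simp [this]
    unfold Lmat
    rw [key _ (by omega), key _ (by omega), Function.update_of_ne h]
    ring

lemma IsSO.abs_le {d : ℕ} {R : Matrix (Fin d) (Fin d) ℝ} (h : IsSO R) (j i : Fin d) :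
    |R j i| ≤ 1 := by
  have h1 := congrFun (congrFun h.1 i) i
  rw [Matrix.mul_apply, Matrix.one_apply_eq] at h1
  simp only [Matrix.transpose_apply] at h1
  have h2 : R j i * R j i ≤ 1 := by
    rw [← h1]
    exact Finset.single_le_sum (f := fun k => R k i * R k i) (fun k _ => mul_self_nonneg _)
      (Finset.mem_univ j)
  rw [← abs_one, ← sq_le_sq]; nlinarith

lemma IsSO.det_add {d : ℕ} {R : Matrix (Fin d) (Fin d) ℝ} (h : IsSO R) (x v : Fin d → ℝ) :
    (R + Matrix.vecMulVec x v).det = 1 + ∑ j, x j * (R.mulVec v) j := by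
  have hu : IsUnit R.det := by rw [h.2]; exact isUnit_one
  have hinv : R⁻¹ = R.transpose := Matrix.inv_eq_left_inv h.1
  rw [Matrix.vecMulVec_eq (Fin 1), Matrix.det_add_replicateCol_mul_replicateRow hu, h.2, hinv, one_mul]
  have e : (Matrix.replicateRow (Fin 1) v * R.transpose * Matrix.replicateCol (Fin 1) x) =
     Matrix.of fun _ _ => ∑ j, x j * (R.mulVec v) j := by
    ext a b
    simp only [Matrix.mul_apply, Matrix.replicateRow_apply, Matrix.replicateCol_apply,
      Matrix.mulVec, dotProduct, Matrix.transpose_apply, Matrix.of_apply]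
    refine Finset.sum_congr rfl fun k _ => ?_
    rw [mul_comm]; congr 1
    exact Finset.sum_congr rfl fun l _ => mul_comm _ _
  rw [e]
  simp

lemma det_lip (d : ℕ) (B : ℝ) : ∃ L : ℝ, 0 ≤ L ∧ ∀ M N : Matrix (Fin d) (Fin d) ℝ,
    (∀ i j, |M i j| ≤ B) → (∀ i j, |N i j| ≤ B) → ∀ δ, 0 ≤ δ → (∀ i j, |M i j - N i j| ≤ δ) →
      |M.det - N.det| ≤ L * δ := by
  have hc : ContDiff ℝ 1 (fun M : Fin d → Fin d → ℝ => Matrix.det (Matrix.of M)) := by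
    simp only [Matrix.det_apply', Matrix.of_apply]
    refine ContDiff.sum fun σ _ => ?_
    refine contDiff_const.mul ?_
    refine contDiff_prod fun i _ => ?_
    fun_prop
  rcases lt_or_ge B 0 with hB | hB
  · rcases Nat.eq_zero_or_pos d with rfl | hd
    · exact ⟨0, le_rfl, fun M N _ _ δ _ _ => by simp⟩
    · refine ⟨0, le_rfl, fun M N h _ => ?_⟩
      have := h ⟨0, hd⟩ ⟨0, hd⟩
      have := abs_nonneg (M ⟨0, hd⟩ ⟨0, hd⟩)
      linarith
  obtain ⟨K, hK⟩ := (hc.contDiffOn (s := Metric.closedBall 0 B)).exists_lipschitzOnWith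
    one_ne_zero (convex_closedBall _ _) (isCompact_closedBall _ _)
  have hmem : ∀ (M : Fin d → Fin d → ℝ) (r : ℝ), 0 ≤ r → (∀ i j, |M i j| ≤ r) → ‖M‖ ≤ r := by
    intro M r hr h
    refine (pi_norm_le_iff_of_nonneg hr).2 fun i => (pi_norm_le_iff_of_nonneg hr).2 fun j => h i j
  refine ⟨K, K.2, fun M N hM hN δ hδ h => ?_⟩
  have h1 := hK.dist_le_mul (fun i j => M i j) (by simpa using hmem _ B hB hM) (fun i j => N i j)
    (by simpa using hmem _ B hB hN)
  rw [Real.dist_eq, dist_eq_norm] at h1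
  refine h1.trans ?_
  gcongr
  exact hmem _ δ hδ h

/-- Rigidity: rotations that agree up to `δ` on a hyperplane agree up to `K δ`. -/
lemma rigidity (d : ℕ) (v : Fin d → ℝ) (hv : v ≠ 0) : ∃ K : ℝ, 0 ≤ K ∧
    ∀ R1 R2 F1 F2 : Matrix (Fin d) (Fin d) ℝ, IsSO R1 → IsSO R2 →
    ∀ a : Fin d → ℝ, F1 - F2 = Matrix.vecMulVec a v → ∀ δ, 0 ≤ δ →
      (∀ i j, |F1 i j - R1 i j| ≤ δ) → (∀ i j, |F2 i j - R2 i j| ≤ δ) →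
      ∀ i j, |R1 i j - R2 i j| ≤ K * δ := by
  set N := ∑ j, |v j| with hN
  have hN0 : 0 ≤ N := Finset.sum_nonneg fun _ _ => abs_nonneg _
  have hvN : ∀ j, |v j| ≤ N := fun j =>
    Finset.single_le_sum (f := fun j => |v j|) (fun _ _ => abs_nonneg _) (Finset.mem_univ j)
  set q := ∑ j, v j * v j with hq
  have hq0 : 0 < q := by
    obtain ⟨j, hj⟩ := Function.ne_iff.1 hv
    exact Finset.sum_pos' (fun _ _ => mul_self_nonneg _) ⟨j, Finset.mem_univ _, mul_self_pos.2 hj⟩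
  obtain ⟨L, hL0, hL⟩ := det_lip d (4 + N)
  have hK0 : 0 ≤ 2 + (4 * L + 2 * N) / q * N := by positivity
  refine ⟨2 + (4 * L + 2 * N) / q * N, hK0, ?_⟩
  intro R1 R2 F1 F2 h1 h2 a ha δ hδ hF1 hF2
  rcases lt_or_ge 1 δ with hδ1 | hδ1
  · intro i j
    have e1 := abs_sub (R1 i j) (R2 i j)
    have e2 := h1.abs_le i j
    have e3 := h2.abs_le i j
    have : 0 ≤ (4 * L + 2 * N) / q * N := by positivity
    nlinarith
  set E : Matrix (Fin d) (Fin d) ℝ := R1 - R2 - Matrix.vecMulVec a v with hE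
  have hEij : ∀ i j, |E i j| ≤ 2 * δ := by
    intro i j
    have : E i j = (F2 i j - R2 i j) - (F1 i j - R1 i j) := by
      rw [hE, ← ha]; simp only [Matrix.sub_apply]; ring
    rw [this]
    have e1 := abs_sub (F2 i j - R2 i j) (F1 i j - R1 i j)
    have := hF1 i j
    have := hF2 i j
    linarith
  -- first determinant identity
  have d1 : |∑ j, a j * (R2.mulVec v) j| ≤ 2 * L * δ := by
    have e1 := h2.det_add a v
    have e2 := hL (R2 + Matrix.vecMulVec a v) R1 ?_ ?_ (2 * δ) (by positivity) ?_
    · rw [e1, h1.2, add_sub_cancel_left] at e2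
      linarith
    · intro i j
      have : (R2 + Matrix.vecMulVec a v) i j = R1 i j - E i j := by
        simp only [hE, Matrix.add_apply, Matrix.sub_apply]; ring
      rw [this]
      have := abs_sub (R1 i j) (E i j)
      have := h1.abs_le i j
      have := hEij i j
      linarith
    · intro i j
      have := h1.abs_le i j
      linarith
    · intro i j
      have : (R2 + Matrix.vecMulVec a v) i j - R1 i j = - E i j := by
        simp only [hE, Matrix.add_apply, Matrix.sub_apply]; ring
      rw [this, abs_neg]; exact hEij i j
  have d2 : ∀ i, |(R1.mulVec v) i - (R2.mulVec v) i| ≤ 4 * L * δ := by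
    intro i
    have e0 := h1.det_add (Pi.single i 1) v
    have e1 := h2.det_add (a + Pi.single i 1) v
    have hs : ∀ M : Matrix (Fin d) (Fin d) ℝ,
        ∑ j, (Pi.single i (1 : ℝ) : Fin d → ℝ) j * (M.mulVec v) j = (M.mulVec v) i := by
      intro M
      simp [Pi.single_apply]
    have hx : ∀ k l, |Matrix.vecMulVec (Pi.single i (1 : ℝ)) v k l| ≤ N := by
      intro k l
      rw [Matrix.vecMulVec_apply]
      by_cases hk : k = i
      · subst hk; simpa using hvN l
      · simpa [hk] using hN0
    have e2 := hL (R1 + Matrix.vecMulVec (Pi.single i 1) v)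
      (R2 + Matrix.vecMulVec (a + Pi.single i 1) v) ?_ ?_ (2 * δ) (by positivity) ?_
    · rw [e0, e1, hs] at e2
      simp only [Pi.add_apply, add_mul, Finset.sum_add_distrib, hs] at e2
      have : (R1.mulVec v) i - (R2.mulVec v) i = (1 + R1.mulVec v i - (1 + (∑ j, a j * (R2.mulVec v) j +
        R2.mulVec v i))) + ∑ j, a j * (R2.mulVec v) j := by ring
      rw [this]
      refine (abs_add_le _ _).trans ?_
      linarith
    · intro k l
      rw [Matrix.add_apply]
      refine (abs_add_le _ _).trans ?_
      have := h1.abs_le k l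
      have := hx k l
      linarith
    · intro k l
      have : (R2 + Matrix.vecMulVec (a + Pi.single i (1 : ℝ)) v : Matrix (Fin d) (Fin d) ℝ) k l =
          (R1 k l - E k l) + Matrix.vecMulVec (Pi.single i (1 : ℝ)) v k l := by
        simp only [hE, Matrix.add_apply, Matrix.sub_apply, Matrix.add_vecMulVec]; ring
      rw [this]
      refine (abs_add_le _ _).trans ?_
      have := abs_sub (R1 k l) (E k l)
      have := h1.abs_le k l
      have := hEij k l
      have := hx k l
      linarith
    · intro k l
      have : (R1 + Matrix.vecMulVec (Pi.single i 1) v) k l -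
          (R2 + Matrix.vecMulVec (a + Pi.single i (1 : ℝ)) v : Matrix (Fin d) (Fin d) ℝ) k l = E k l := by
        simp only [hE, Matrix.add_apply, Matrix.sub_apply, Matrix.add_vecMulVec]; ring
      rw [this]; exact hEij k l
  have d3 : ∀ i, |a i| ≤ (4 * L + 2 * N) / q * δ := by
    intro i
    have e1 : (R1.mulVec v) i - (R2.mulVec v) i = (∑ j, E i j * v j) + a i * q := by
      simp only [Matrix.mulVec, dotProduct, hq, hE, Finset.mul_sum, ← Finset.sum_sub_distrib,
        ← Finset.sum_add_distrib, Matrix.sub_apply, Matrix.vecMulVec_apply]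
      exact Finset.sum_congr rfl fun j _ => by ring
    have e2 : |∑ j, E i j * v j| ≤ 2 * δ * N := by
      refine (Finset.abs_sum_le_sum_abs _ _).trans ?_
      rw [hN, Finset.mul_sum]
      refine Finset.sum_le_sum fun j _ => ?_
      rw [abs_mul]
      exact mul_le_mul_of_nonneg_right (hEij i j) (abs_nonneg _)
    have e3 : a i * q = ((R1.mulVec v) i - (R2.mulVec v) i) - ∑ j, E i j * v j := by
      rw [e1]; ring
    have e4 : |a i| * q ≤ (4 * L + 2 * N) * δ := by
      have e5 : |a i| * q = |a i * q| := by rw [abs_mul, abs_of_pos hq0]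
      rw [e5, e3]
      refine (abs_sub _ _).trans ?_
      have := d2 i
      linarith
    rw [div_mul_eq_mul_div, le_div_iff₀ hq0]
    exact e4
  intro i j
  have e1 : R1 i j - R2 i j = E i j + a i * v j := by
    simp only [hE, Matrix.sub_apply, Matrix.vecMulVec_apply]; ring
  rw [e1]
  refine (abs_add_le _ _).trans ?_
  rw [abs_mul]
  have e2 := hEij i j
  have e3 := mul_le_mul (d3 i) (hvN j) (abs_nonneg _) (by positivity)
  linarith

lemma sqrt_sum_le {ι κ : Type*} [Fintype ι] [Fintype κ] (f : ι → κ → ℝ) (a : ℝ) (ha : 0 ≤ a)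
    (h : ∀ i k, |f i k| ≤ a) :
    Real.sqrt (∑ i, ∑ k, f i k ^ 2) ≤ (Fintype.card ι * Fintype.card κ : ℝ) * a := by
  rw [Real.sqrt_le_left (by positivity)]
  have h1 : ∑ i, ∑ k, f i k ^ 2 ≤ ∑ _i : ι, ∑ _k : κ, a ^ 2 :=
    Finset.sum_le_sum fun i _ => Finset.sum_le_sum fun k _ => sq_le_sq.2 (by
      rw [abs_of_nonneg ha]; exact h i k)
  refine h1.trans ?_
  simp only [Finset.sum_const, Finset.card_univ, nsmul_eq_mul, mul_pow]
  rw [← mul_assoc]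
  refine mul_le_mul_of_nonneg_right ?_ (sq_nonneg _)
  rw [← mul_pow]
  exact_mod_cast Nat.le_self_pow two_ne_zero (Fintype.card ι * Fintype.card κ)

lemma le_sqrt_sum {ι κ : Type*} [Fintype ι] [Fintype κ] (f : ι → κ → ℝ) (i : ι) (k : κ) :
    |f i k| ≤ Real.sqrt (∑ i, ∑ k, f i k ^ 2) := by
  refine Real.abs_le_sqrt ?_
  refine (Finset.single_le_sum (f := fun k => f i k ^ 2) (fun _ _ => sq_nonneg _)
    (Finset.mem_univ k)).trans ?_
  exact Finset.single_le_sum (f := fun i => ∑ k, f i k ^ 2)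
    (fun _ _ => Finset.sum_nonneg fun _ _ => sq_nonneg _) (Finset.mem_univ i)

def ent {d : ℕ} (B : Matrix (Fin d) (Fin d) ℝ) : ℝ := ∑ i, ∑ j, |B i j|

lemma ent_nonneg {d : ℕ} (B : Matrix (Fin d) (Fin d) ℝ) : 0 ≤ ent B :=
  Finset.sum_nonneg fun _ _ => Finset.sum_nonneg fun _ _ => abs_nonneg _

lemma mul_ent {d : ℕ} (M B : Matrix (Fin d) (Fin d) ℝ) (a : ℝ) (ha : 0 ≤ a)
    (h : ∀ i j, |M i j| ≤ a) (i j : Fin d) : |(M * B) i j| ≤ a * ent B := by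
  rw [Matrix.mul_apply]
  refine (Finset.abs_sum_le_sum_abs _ _).trans ?_
  unfold ent
  rw [Finset.mul_sum]
  refine Finset.sum_le_sum fun k _ => ?_
  rw [abs_mul]
  refine mul_le_mul (h i k) ?_ (abs_nonneg _) ha
  exact Finset.single_le_sum (f := fun j => |B k j|) (fun _ _ => abs_nonneg _) (Finset.mem_univ j)

abbrev Tix (d : ℕ) := Equiv.Perm (Fin d) × (Fin d → Bool)

/-- the gradient on the sector `T`. -/
def Gr {d : ℕ} (A : Matrix (Fin d) (Fin d) ℝ) (T : Tix d) (G : CellMat d) :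
    Matrix (Fin d) (Fin d) ℝ := Lmat T.1 T.2 G * A⁻¹

def Rel {d : ℕ} (A : Matrix (Fin d) (Fin d) ℝ) (T T' : Tix d) : Prop :=
  ∃ K : ℝ, 0 ≤ K ∧ ∀ (G : CellMat d) (R : Tix d → Matrix (Fin d) (Fin d) ℝ), (∀ T, IsSO (R T)) →
    ∀ δ, 0 ≤ δ → (∀ T i j, |Gr A T G i j - R T i j| ≤ δ) →
      ∀ i j, |R T i j - R T' i j| ≤ K * δ

lemma Rel.refl {d : ℕ} (A : Matrix (Fin d) (Fin d) ℝ) (T : Tix d) : Rel A T T :=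
  ⟨0, le_rfl, fun G R _ δ _ _ i j => by simp⟩

lemma Rel.symm {d : ℕ} {A : Matrix (Fin d) (Fin d) ℝ} {T T' : Tix d} (h : Rel A T T') :
    Rel A T' T := by
  obtain ⟨K, hK, h⟩ := h
  refine ⟨K, hK, fun G R hR δ hδ hG i j => ?_⟩
  rw [abs_sub_comm]; exact h G R hR δ hδ hG i j

lemma Rel.trans {d : ℕ} {A : Matrix (Fin d) (Fin d) ℝ} {T T' T'' : Tix d} (h : Rel A T T')
    (h' : Rel A T' T'') : Rel A T T'' := by
  obtain ⟨K, hK, h⟩ := h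
  obtain ⟨K', hK', h'⟩ := h'
  refine ⟨K + K', add_nonneg hK hK', fun G R hR δ hδ hG i j => ?_⟩
  have e1 := h G R hR δ hδ hG i j
  have e2 := h' G R hR δ hδ hG i j
  have e3 := abs_sub_le (R T i j) (R T' i j) (R T'' i j)
  linarith

lemma Rel.adj {d : ℕ} {A : Matrix (Fin d) (Fin d) ℝ} (hA : 0 < A.det) {T T' : Tix d}
    (h : ∃ v : Fin d → ℝ, v ≠ 0 ∧ ∀ G : CellMat d, ∃ a : Fin d → ℝ,
      Lmat T.1 T.2 G - Lmat T'.1 T'.2 G = Matrix.vecMulVec a v) : Rel A T T' := by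
  obtain ⟨v, hv, h⟩ := h
  have hu : IsUnit A.det := hA.ne'.isUnit
  have hv' : Matrix.vecMul v A⁻¹ ≠ 0 := by
    intro h0
    apply hv
    have := congrArg (fun w => Matrix.vecMul w A) h0
    simpa [Matrix.vecMul_vecMul, Matrix.nonsing_inv_mul A hu] using this
  obtain ⟨K, hK, hr⟩ := rigidity d _ hv'
  refine ⟨K, hK, fun G R hR δ hδ hG => ?_⟩
  obtain ⟨a, ha⟩ := h G
  refine hr (R T) (R T') (Gr A T G) (Gr A T' G) (hR T) (hR T') a ?_ δ hδ (hG T) (hG T')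
  unfold Gr
  rw [← Matrix.sub_mul, ha, Matrix.vecMulVec_mul]

lemma rel_perm {n : ℕ} {A : Matrix (Fin (n + 1)) (Fin (n + 1)) ℝ} (hA : 0 < A.det)
    (s : Fin (n + 1) → Bool) (τ τ' : Equiv.Perm (Fin (n + 1))) : Rel A (τ, s) (τ', s) := by
  have key : ∀ π : Equiv.Perm (Fin (n + 1)), ∀ τ, Rel A (τ, s) (π * τ, s) := by
    intro π
    have hπ : π ∈ Submonoid.closure (Set.range fun i : Fin n ↦ Equiv.swap i.castSucc i.succ) := by
      rw [Equiv.Perm.mclosure_swap_castSucc_succ]; trivial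
    induction hπ using Submonoid.closure_induction_left with
    | one => intro τ; rw [one_mul]; exact Rel.refl _ _
    | mul_left x hx y hy ih =>
      intro τ
      obtain ⟨m, rfl⟩ := hx
      refine (ih τ).trans ?_
      rw [mul_assoc]
      exact Rel.adj hA (Lmat_swap (y * τ) s m)
  have := key (τ' * τ⁻¹) τ
  simpa using this

lemma rel_all {n : ℕ} {A : Matrix (Fin (n + 1)) (Fin (n + 1)) ℝ} (hA : 0 < A.det)
    (T T' : Tix (n + 1)) : Rel A T T' := by
  have flip : ∀ s i c, Rel A (1, s) (1, Function.update s i c) := by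
    intro s i c
    refine (rel_perm hA s 1 (Equiv.swap i (Fin.last n))).trans ?_
    refine Rel.trans ?_ (rel_perm hA _ (Equiv.swap i (Fin.last n)) 1)
    exact Rel.adj hA (Lmat_flip (Equiv.swap i (Fin.last n)) s i (by simp) c)
  have key : ∀ s s' : Fin (n + 1) → Bool, Rel A (1, s) (1, s') := by
    intro s s'
    have : ∀ F : Finset (Fin (n + 1)), Rel A (1, s) (1, F.piecewise s' s) := by
      intro F
      induction F using Finset.induction_on with
      | empty => simpa using Rel.refl _ _
      | insert a F ha ih =>
        rw [Finset.piecewise_insert]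
        exact ih.trans (flip _ _ _)
    simpa using this Finset.univ
  obtain ⟨τ, s⟩ := T
  obtain ⟨τ', s'⟩ := T'
  exact (rel_perm hA s τ 1).trans ((key s s').trans (rel_perm hA s' 1 τ'))

lemma distSO_nonneg {d : ℕ} (F : Fin d → Fin d → ℝ) : 0 ≤ distSO d F := by
  refine Real.sInf_nonneg ?_
  rintro t ⟨R, _, rfl⟩
  exact Real.sqrt_nonneg _

lemma distSObar_nonneg {d : ℕ} (A : Matrix (Fin d) (Fin d) ℝ) (G : CellMat d) :
    0 ≤ distSObar d A G := by
  refine Real.sInf_nonneg ?_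
  rintro t ⟨R, _, rfl⟩
  exact Real.sqrt_nonneg _

lemma distSO_le {d : ℕ} (F : Fin d → Fin d → ℝ) (R : Matrix (Fin d) (Fin d) ℝ) (hR : IsSO R) :
    distSO d F ≤ sqnorm d fun j i => F j i - R j i := by
  refine csInf_le ⟨0, ?_⟩ ⟨R, hR, rfl⟩
  rintro t ⟨R, _, rfl⟩
  exact Real.sqrt_nonneg _

lemma distSObar_le {d : ℕ} (A : Matrix (Fin d) (Fin d) ℝ) (G : CellMat d)
    (R : Matrix (Fin d) (Fin d) ℝ) (hR : IsSO R) :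
    distSObar d A G ≤ mnorm (G - rotCell R (Zmat d A)) := by
  refine csInf_le ⟨0, ?_⟩ ⟨_, ⟨R, hR, rfl⟩, rfl⟩
  rintro t ⟨R, _, rfl⟩
  exact Real.sqrt_nonneg _

lemma exists_near {d : ℕ} (F : Fin d → Fin d → ℝ) (η : ℝ) (hη : 0 < η) :
    ∃ R : Matrix (Fin d) (Fin d) ℝ, IsSO R ∧ ∀ j i, |F j i - R j i| ≤ distSO d F + η := by
  obtain ⟨t, ⟨R, hR, rfl⟩, ht⟩ := exists_lt_of_csInf_lt
    (s := {t | ∃ R : Matrix (Fin d) (Fin d) ℝ, IsSO R ∧ t = sqnorm d fun j i => F j i - R j i})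
    ⟨_, 1, isSO_one, rfl⟩ (lt_add_of_pos_right (distSO d F) hη)
  exact ⟨R, hR, fun j i => (le_sqrt_sum (fun j i => F j i - R j i) j i).trans ht.le⟩

/-- the corner estimate -/
lemma corner_est {d : ℕ} (A : Matrix (Fin d) (Fin d) ℝ) (hA : 0 < A.det) (G : CellMat d)
    (hG : PerpTrans G) (R : Matrix (Fin d) (Fin d) ℝ) (δ : ℝ) (hδ : 0 ≤ δ)
    (h : ∀ s i j, |Gr A (1, s) G i j - R i j| ≤ δ) :
    mnorm (G - rotCell R (Zmat d A)) ≤ (d * 2 ^ d : ℝ) * (d * (δ * ent A)) := by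
  have hu : IsUnit A.det := hA.ne'.isUnit
  have := sqrt_sum_le (G - rotCell R (Zmat d A)) (d * (δ * ent A))
    (by have := ent_nonneg A; positivity) ?_
  · simpa [mnorm] using this
  · intro j b
    have e1 := Lmat_corner b G hG j
    have e2 : Lmat 1 b G = Gr A (1, b) G * A := by
      simp only [Gr]
      rw [Matrix.mul_assoc, Matrix.nonsing_inv_mul A hu, Matrix.mul_one]
    have e3 : (G - rotCell R (Zmat d A)) j b =
        ∑ i, ((Gr A (1, b) G - R) * A) j i * cornerVec b i := by
      rw [Pi.sub_apply, Pi.sub_apply, rotCell_Z, ← e1, e2, ← Finset.sum_sub_distrib]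
      refine Finset.sum_congr rfl fun i _ => ?_
      rw [Matrix.sub_mul, Matrix.sub_apply]; ring
    rw [e3]
    refine (Finset.abs_sum_le_sum_abs _ _).trans ?_
    refine (Finset.sum_le_sum (g := fun _ => δ * ent A) fun i _ => ?_).trans ?_
    · rw [abs_mul, cornerVec_eq, abs_div, abs_bs]
      have e4 := mul_ent (Gr A (1, b) G - R) A δ hδ (h b) j i
      rw [abs_of_pos (by norm_num : (0 : ℝ) < 2)]
      have := abs_nonneg (((Gr A (1, b) G - R) * A) j i)
      linarith
    · simp

lemma lower_dist {d : ℕ} (hd : 2 ≤ d) (A : Matrix (Fin d) (Fin d) ℝ) (hA : 0 < A.det) :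
    ∃ K : ℝ, 0 ≤ K ∧ ∀ G : CellMat d, PerpTrans G →
      distSObar d A G ≤ K * ∑ T : Tix d, distSO d (Gr A T G) := by
  obtain ⟨n, rfl⟩ : ∃ n, d = n + 1 := ⟨d - 1, by omega⟩
  have h := fun T => rel_all hA (T : Tix (n + 1)) (1, fun _ => false)
  choose K hK0 hK using h
  have hS0 : 0 ≤ ∑ T, K T := Finset.sum_nonneg fun T _ => hK0 T
  have hKS : ∀ T, K T ≤ ∑ T, K T := fun T =>
    Finset.single_le_sum (f := K) (fun T _ => hK0 T) (Finset.mem_univ T)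
  set S := ∑ T, K T
  set C : ℝ := (((n + 1 : ℕ) : ℝ) * 2 ^ (n + 1)) * (((n + 1 : ℕ) : ℝ) * ((1 + S) * ent A)) with hC
  have hC0 : 0 ≤ C := by have := ent_nonneg A; positivity
  refine ⟨C, hC0, fun G hG => ?_⟩
  set D := ∑ T : Tix (n + 1), distSO (n + 1) (Gr A T G) with hD
  have hD0 : 0 ≤ D := Finset.sum_nonneg fun T _ => distSO_nonneg _
  have key : ∀ η > 0, distSObar (n + 1) A G ≤ C * (D + η) := by
    intro η hη
    choose R hR hRn using fun T : Tix (n + 1) => exists_near (Gr A T G) η hη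
    have hδ : ∀ T i j, |Gr A T G i j - R T i j| ≤ D + η := by
      intro T i j
      refine (hRn T i j).trans ?_
      have : distSO (n + 1) (Gr A T G) ≤ D :=
        Finset.single_le_sum (f := fun T : Tix (n + 1) => distSO (n + 1) (Gr A T G))
          (fun T _ => distSO_nonneg _) (Finset.mem_univ T)
      linarith
    have hδ0 : 0 ≤ D + η := by positivity
    refine (distSObar_le A G _ (hR (1, fun _ => false))).trans ?_
    have := corner_est A hA G hG (R (1, fun _ => false)) ((1 + S) * (D + η)) (by positivity) ?_
    · refine this.trans (le_of_eq ?_)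
      rw [hC]; ring
    · intro s i j
      have e1 := hK (1, s) G R hR (D + η) hδ0 hδ i j
      have e2 := hδ (1, s) i j
      have e3 := abs_sub_le (Gr A (1, s) G i j) (R (1, s) i j) (R (1, fun _ => false) i j)
      have e4 := mul_le_mul_of_nonneg_right (hKS (1, s)) hδ0
      linarith
  refine le_of_forall_pos_le_add fun e he => ?_
  refine (key (e / (C + 1)) (by positivity)).trans ?_
  rw [mul_add]
  have : C * (e / (C + 1)) ≤ e := by
    rw [mul_div_assoc', div_le_iff₀ (by positivity)]
    nlinarith
  linarith

lemma lower_norm {d : ℕ} (A : Matrix (Fin d) (Fin d) ℝ) (hA : 0 < A.det) :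
    ∃ K : ℝ, 0 ≤ K ∧ ∀ G : CellMat d, PerpTrans G →
      mnorm G ≤ K * ∑ T : Tix d, sqnorm d (Gr A T G) := by
  refine ⟨(d * 2 ^ d : ℝ) * (d * ent A), by have := ent_nonneg A; positivity, fun G hG => ?_⟩
  have hD0 : 0 ≤ ∑ T : Tix d, sqnorm d (Gr A T G) := Finset.sum_nonneg fun T _ => Real.sqrt_nonneg _
  have := corner_est A hA G hG 0 (∑ T : Tix d, sqnorm d (Gr A T G)) hD0 ?_
  · have e : rotCell 0 (Zmat d A) = 0 := by
      funext j b; simp [rotCell]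
    rw [e, sub_zero] at this
    refine this.trans (le_of_eq (by ring))
  · intro s i j
    rw [Matrix.zero_apply, sub_zero]
    refine (le_sqrt_sum (Gr A (1, s) G) i j).trans ?_
    exact Finset.single_le_sum (f := fun T : Tix d => sqnorm d (Gr A T G))
          (fun T _ => Real.sqrt_nonneg _) (Finset.mem_univ (1, s))

lemma upper_norm {d : ℕ} (A : Matrix (Fin d) (Fin d) ℝ) :
    ∃ K : ℝ, 0 < K ∧ ∀ (G : CellMat d) (T : Tix d), sqnorm d (Gr A T G) ≤ K * mnorm G := by
  have h0 := ent_nonneg A⁻¹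
  refine ⟨(d * d : ℝ) * (4 * ent A⁻¹) + 1, by positivity, fun G T => ?_⟩
  have hm : 0 ≤ mnorm G := Real.sqrt_nonneg _
  have := sqrt_sum_le (Gr A T G) (4 * mnorm G * ent A⁻¹) (by positivity) ?_
  · simp only [Fintype.card_fin] at this
    refine this.trans ?_
    nlinarith
  · intro i j
    exact mul_ent _ _ _ (by positivity) (Lmat_bound T.1 T.2 G (mnorm G) fun j b => le_sqrt_sum G j b) i j

lemma upper_dist {d : ℕ} (A : Matrix (Fin d) (Fin d) ℝ) (hA : 0 < A.det) :
    ∃ K : ℝ, 0 < K ∧ ∀ (G : CellMat d) (T : Tix d), distSO d (Gr A T G) ≤ K * distSObar d A G := by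
  obtain ⟨K, hK, h⟩ := upper_norm A
  refine ⟨K, hK, fun G T => ?_⟩
  rw [← div_le_iff₀' hK]
  refine le_csInf ⟨_, _, ⟨1, isSO_one, rfl⟩, rfl⟩ ?_
  rintro t ⟨_, ⟨R, hR, rfl⟩, rfl⟩
  rw [div_le_iff₀' hK]
  refine (distSO_le _ R hR).trans ?_
  refine le_trans (le_of_eq ?_) (h (G - rotCell R (Zmat d A)) T)
  congr 1
  funext j i
  unfold Gr
  rw [Lmat_sub, Lmat_Z, Matrix.sub_mul, Matrix.mul_assoc,
    Matrix.mul_nonsing_inv A hA.ne'.isUnit, Matrix.mul_one, Matrix.sub_apply]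

/-- from sector estimates to the averaged estimates -/
lemma avg_lower {ι : Type*} [Fintype ι] (w φ : ι → ℝ) (hw : ∀ i, 0 < w i) (hφ : ∀ i, 0 ≤ φ i)
    (p : ℝ) (hp : 1 ≤ p) (K x : ℝ) (hK : 0 ≤ K) (hx : 0 ≤ x) (h : x ≤ K * ∑ i, φ i) :
    x ^ p ≤ (K ^ p * (Fintype.card ι : ℝ) ^ (p - 1) * ∑ i, (w i)⁻¹) * ∑ i, w i * φ i ^ p := by
  have h1 : x ^ p ≤ (K * ∑ i, φ i) ^ p := Real.rpow_le_rpow hx h (by linarith)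
  refine h1.trans ?_
  rw [Real.mul_rpow hK (Finset.sum_nonneg fun i _ => hφ i)]
  have h2 := Real.rpow_sum_le_const_mul_sum_rpow_of_nonneg Finset.univ hp (fun i _ => hφ i)
  rw [Finset.card_univ] at h2
  have h3 : ∑ i, φ i ^ p ≤ (∑ i, (w i)⁻¹) * ∑ i, w i * φ i ^ p := by
    rw [Finset.mul_sum]
    refine Finset.sum_le_sum fun i _ => ?_
    have e1 : (w i)⁻¹ ≤ ∑ i, (w i)⁻¹ := Finset.single_le_sum (f := fun i => (w i)⁻¹)
      (fun i _ => (inv_pos.2 (hw i)).le) (Finset.mem_univ i)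
    have e2 : φ i ^ p = (w i)⁻¹ * (w i * φ i ^ p) := by
      rw [← mul_assoc, inv_mul_cancel₀ (hw i).ne', one_mul]
    calc φ i ^ p = (w i)⁻¹ * (w i * φ i ^ p) := e2
      _ ≤ _ := mul_le_mul_of_nonneg_right e1
        (mul_nonneg (hw i).le (Real.rpow_nonneg (hφ i) _))
  have hKp : 0 ≤ K ^ p := Real.rpow_nonneg hK _
  have hcp : (0 : ℝ) ≤ (Fintype.card ι : ℝ) ^ (p - 1) := Real.rpow_nonneg (by positivity) _
  calc K ^ p * (∑ i, φ i) ^ p ≤ K ^ p * ((Fintype.card ι : ℝ) ^ (p - 1) * ∑ i, φ i ^ p) := by gcongr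
    _ ≤ K ^ p * ((Fintype.card ι : ℝ) ^ (p - 1) * ((∑ i, (w i)⁻¹) * ∑ i, w i * φ i ^ p)) := by gcongr
    _ = _ := by ring

lemma avg_upper {ι : Type*} [Fintype ι] (w φ : ι → ℝ) (hw : ∀ i, 0 < w i) (hφ : ∀ i, 0 ≤ φ i)
    (p : ℝ) (hp : 1 ≤ p) (K x : ℝ) (hK : 0 ≤ K) (hx : 0 ≤ x) (h : ∀ i, φ i ≤ K * x) :
    ∑ i, w i * φ i ^ p ≤ (K ^ p * ∑ i, w i) * x ^ p := by
  have : (K ^ p * ∑ i, w i) * x ^ p = ∑ i, w i * (K * x) ^ p := by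
    rw [← Finset.sum_mul, Real.mul_rpow hK hx]; ring
  rw [this]
  refine Finset.sum_le_sum fun i _ => ?_
  exact mul_le_mul_of_nonneg_left (Real.rpow_le_rpow (hφ i) (h i) (by linarith)) (hw i).le

/-- the open cones around the barycenter on which the interpolation is affine. -/
def Sector {d : ℕ} (T : Tix d) : Set (Fin d → ℝ) :=
  {u | (∀ i j, T.1 i < T.1 j → |u j - 1 / 2| < |u i - 1 / 2|) ∧
    ∀ i, (T.2 i = true → 1 / 2 < u i) ∧ (T.2 i = false → u i < 1 / 2)}

def unitCube (d : ℕ) : Set (Fin d → ℝ) := {u | ∀ i, u i ∈ Ico (0 : ℝ) 1}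

lemma unitCube_eq (d : ℕ) : unitCube d = Set.pi univ fun _ => Ico (0 : ℝ) 1 := by
  ext u; simp [unitCube]

lemma isOpen_imp_of {α : Type*} [TopologicalSpace α] (q : Prop) (P : α → Prop)
    (h : IsOpen {x | P x}) : IsOpen {x | q → P x} := by
  by_cases hq : q <;> simp [hq, h]

lemma Sector_open {d : ℕ} (T : Tix d) : IsOpen (Sector T) := by
  unfold Sector
  refine IsOpen.and ?_ ?_
  · simp only [ofPred_forall]
    refine isOpen_iInter_of_finite fun i => isOpen_iInter_of_finite fun j => ?_
    refine isOpen_iInter_of_finite fun _ => (isOpen_lt (f := fun u : Fin d → ℝ => |u j - 1 / 2|)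
      (g := fun u : Fin d → ℝ => |u i - 1 / 2|) (by fun_prop) (by fun_prop))
  · simp only [ofPred_forall]
    refine isOpen_iInter_of_finite fun i => IsOpen.and ?_ ?_
    · exact isOpen_imp_of _ _ (isOpen_lt (by fun_prop) (by fun_prop))
    · exact isOpen_imp_of _ _ (isOpen_lt (by fun_prop) (by fun_prop))

lemma Sector_le_iff {d : ℕ} {T : Tix d} {u : Fin d → ℝ} (hu : u ∈ Sector T) (i j : Fin d) :
    |u i - 1 / 2| < |u j - 1 / 2| ↔ T.1 j < T.1 i := by
  refine ⟨fun h => ?_, fun h => hu.1 _ _ h⟩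
  by_contra h'
  rcases (not_lt.1 h').lt_or_eq with h1 | h1
  · exact absurd (hu.1 _ _ h1) (not_lt.2 h.le)
  · have := T.1.injective h1
    subst this
    exact lt_irrefl _ h

lemma Sector_sg {d : ℕ} {T : Tix d} {u : Fin d → ℝ} (hu : u ∈ Sector T) : sg u = T.2 := by
  funext i
  unfold sg
  have h := hu.2 i
  cases hT : T.2 i
  · have := h.2 hT
    simp at *
    linarith
  · have := h.1 hT
    simp at *
    linarith

lemma Sector_disj (d : ℕ) : Pairwise (Function.onFun Disjoint (fun T : Tix d => Sector T)) := by
  intro T T' hne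
  rw [Function.onFun, Set.disjoint_left]
  intro u hu hu'
  refine hne (Prod.ext ?_ ?_)
  · have h : ∀ i j, T.1 j < T.1 i ↔ T'.1 j < T'.1 i := fun i j => by
      rw [← Sector_le_iff hu, ← Sector_le_iff hu']
    have hm : StrictMono (fun i => T'.1 (T.1.symm i)) := by
      intro a b hab
      rw [← h]
      simpa using hab
    have := (StrictMono.range_inj hm strictMono_id).1 (by
      rw [Set.range_id]
      exact ((T.1.symm.trans T'.1).surjective).range_eq)
    ext i
    have := congrFun this (T.1 i)
    simp at this
    rw [this]
  · rw [← Sector_sg hu, ← Sector_sg hu']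

lemma Sector_exists {d : ℕ} (u : Fin d → ℝ) (inj : Function.Injective fun i => |u i - 1 / 2|)
    (hne : ∀ i, u i ≠ 1 / 2) : ∃ T : Tix d, u ∈ Sector T := by
  set f : Fin d → ℝ := fun i => -|u i - 1 / 2| with hf
  refine ⟨((Tuple.sort f).symm, sg u), ?_, ?_⟩
  · intro i j hij
    have hm := Tuple.monotone_sort f hij.le
    simp only [Function.comp, Equiv.apply_symm_apply, hf] at hm
    have hle : |u j - 1 / 2| ≤ |u i - 1 / 2| := by linarith
    refine lt_of_le_of_ne hle fun h => ?_
    have := inj h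
    subst this
    exact lt_irrefl _ hij
  · intro i
    simp only [sg]
    split_ifs with h
    · simp; simpa using h
    · simp; exact lt_of_le_of_ne (by simpa using h) (by simpa using hne i)

lemma null_affine {d : ℕ} (l : (Fin d → ℝ) →ₗ[ℝ] ℝ) (hl : l ≠ 0) (c : ℝ) :
    volume {u | l u = c} = 0 := by
  have e : {u | l u = c} =
      ((affineSpan ℝ ({c} : Set ℝ)).comap l.toAffineMap : Set (Fin d → ℝ)) := by
    ext u
    simp [AffineSubspace.coe_comap, AffineSubspace.coe_affineSpan_singleton]
  rw [e]
  refine Measure.addHaar_affineSubspace _ _ fun h => hl ?_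
  have h2 : ∀ u, l u = c := fun u => by
    have : u ∈ {u | l u = c} := by rw [e, h]; trivial
    exact this
  ext u
  have h0 := h2 0
  simp at h0
  simp [h2, ← h0]

lemma ae_sector (d : ℕ) : ∀ᵐ u : Fin d → ℝ, ∃ T : Tix d, u ∈ Sector T := by
  have h1 : ∀ᵐ u : Fin d → ℝ, ∀ i, u i ≠ 1 / 2 := by
    rw [ae_all_iff]
    intro i
    rw [ae_iff]
    simp only [ne_eq, not_not]
    refine null_affine (LinearMap.proj i) (fun h => ?_) _
    have := LinearMap.congr_fun h (Pi.single i 1)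
    simp at this
  have h2 : ∀ᵐ u : Fin d → ℝ, ∀ i j, i ≠ j → u i - u j ≠ 0 := by
    simp only [ae_all_iff]
    intro i j hij
    rw [ae_iff]
    simp only [ne_eq, not_not]
    refine null_affine (LinearMap.proj (R := ℝ) (φ := fun _ => ℝ) i - LinearMap.proj j)
      (fun h => ?_) _
    have := LinearMap.congr_fun h (Pi.single i 1)
    simp [hij.symm] at this
  have h3 : ∀ᵐ u : Fin d → ℝ, ∀ i j, i ≠ j → u i + u j ≠ 1 := by
    simp only [ae_all_iff]
    intro i j hij
    rw [ae_iff]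
    simp only [ne_eq, not_not]
    refine null_affine (LinearMap.proj (R := ℝ) (φ := fun _ => ℝ) i + LinearMap.proj j)
      (fun h => ?_) _
    have := LinearMap.congr_fun h (Pi.single i 1)
    simp [hij.symm] at this
  filter_upwards [h1, h2, h3] with u h1 h2 h3
  refine Sector_exists u (fun i j hij => ?_) h1
  by_contra hne
  rcases abs_eq_abs.1 hij with h | h
  · exact h2 i j hne (by linarith)
  · exact h3 i j hne (by linarith)

lemma Sector_pos {d : ℕ} (T : Tix d) : 0 < volume.real (Sector T ∩ unitCube d) := by
  rw [Measure.real, ENNReal.toReal_pos_iff]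
  constructor
  · have ho : IsOpen (Sector T ∩ Set.pi univ fun _ => Ioo (0 : ℝ) 1) :=
      (Sector_open T).inter (isOpen_set_pi finite_univ fun _ _ => isOpen_Ioo)
    refine (ho.measure_pos volume ?_).trans_le (measure_mono ?_)
    · refine ⟨fun i => 1 / 2 + bs (T.2 i) * (1 / ((T.1 i : ℕ) + 3 : ℝ)), ⟨?_, ?_⟩, ?_⟩
      · intro i j hij
        have e : ∀ i, |1 / 2 + bs (T.2 i) * (1 / ((T.1 i : ℕ) + 3 : ℝ)) - 1 / 2| =
            1 / ((T.1 i : ℕ) + 3 : ℝ) := fun i => by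
          rw [add_sub_cancel_left, abs_mul, abs_bs, one_mul, abs_of_pos (by positivity)]
        simp only [e]
        have : ((T.1 i : ℕ) : ℝ) < (T.1 j : ℕ) := by exact_mod_cast hij
        exact one_div_lt_one_div_of_lt (by positivity) (by linarith)
      · intro i
        have : 0 < 1 / ((T.1 i : ℕ) + 3 : ℝ) := by positivity
        constructor
        · intro h; simp only [h, bs]; simp; simpa using this
        · intro h; simp only [h, bs]; simp; simpa using this
      · intro i _
        have h0 : 0 < 1 / ((T.1 i : ℕ) + 3 : ℝ) := by positivity
        have h1 : 1 / ((T.1 i : ℕ) + 3 : ℝ) ≤ 1 / 3 :=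
          one_div_le_one_div_of_le (by norm_num) (by
            have : (0 : ℝ) ≤ ((T.1 i : ℕ) : ℝ) := by positivity
            linarith)
        show 1 / 2 + bs (T.2 i) * (1 / ((T.1 i : ℕ) + 3 : ℝ)) ∈ Ioo (0 : ℝ) 1
        generalize 1 / ((T.1 i : ℕ) + 3 : ℝ) = q at h0 h1
        have hb := abs_bs (T.2 i)
        rcases (abs_eq zero_le_one).1 hb with h | h <;> rw [h, mem_Ioo] <;>
          constructor <;> linarith
    · rw [unitCube_eq]
      exact inter_subset_inter_right _ (Set.pi_mono fun _ _ => Ioo_subset_Ico_self)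
  · refine (measure_mono inter_subset_right).trans_lt ?_
    rw [unitCube_eq, volume_pi_pi]
    simp

lemma interp_sector {d : ℕ} {T : Tix d} {u : Fin d → ℝ} (hu : u ∈ Sector T)
    (f : (Fin d → Bool) → ℝ) :
    cubeInterp d f u = avgf f (fun _ => False) T.2 + ∑ i,
      (2 * bs (T.2 i) * (avgf f (fun l => (T.1 l : ℕ) < T.1 i + 1) T.2
        - avgf f (fun l => (T.1 l : ℕ) < T.1 i) T.2)) * (u i - 1 / 2) := by
  rw [cubeInterp_eval d f u ?_ ?_, Sector_sg hu]
  · congr 1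
    refine Finset.sum_congr rfl fun i _ => ?_
    have e1 : avgf f (fun j => |u i - 1 / 2| ≤ |u j - 1 / 2|) T.2 =
        avgf f (fun l => (T.1 l : ℕ) < T.1 i + 1) T.2 := by
      refine avgf_congr f (fun j => ?_) fun _ _ => rfl
      rw [← not_lt, Sector_le_iff hu, not_lt, Fin.le_def, Nat.lt_succ_iff]
    have e2 : avgf f (fun j => |u i - 1 / 2| < |u j - 1 / 2|) T.2 =
        avgf f (fun l => (T.1 l : ℕ) < T.1 i) T.2 := by
      refine avgf_congr f (fun j => ?_) fun _ _ => rfl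
      rw [Sector_le_iff hu, Fin.lt_def]
    have e3 : |u i - 1 / 2| = bs (T.2 i) * (u i - 1 / 2) := by
      have h := hu.2 i
      cases hT : T.2 i
      · have := h.2 hT
        rw [abs_of_neg (by linarith)]; simp [bs]
      · have := h.1 hT
        rw [abs_of_pos (by linarith)]; simp [bs]
    rw [e1, e2, e3]; ring
  · intro i j hij
    by_contra hne
    rcases lt_or_gt_of_ne (fun h => hne (T.1.injective h)) with h | h
    · exact absurd hij (hu.1 _ _ h).ne'
    · exact absurd hij (hu.1 _ _ h).ne
  · intro i
    have h := hu.2 i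
    cases hT : T.2 i
    · exact (h.2 hT).ne
    · exact (h.1 hT).ne'

lemma inv_smul_mat {d : ℕ} (A : Matrix (Fin d) (Fin d) ℝ) (hA : 0 < A.det) (ε : ℝ) (hε : 0 < ε) :
    (ε • A)⁻¹ = ε⁻¹ • A⁻¹ := by
  have hu : IsUnit A.det := hA.ne'.isUnit
  refine Matrix.inv_eq_right_inv ?_
  rw [Matrix.smul_mul, Matrix.mul_smul, smul_smul, mul_inv_cancel₀ hε.ne', one_smul,
    Matrix.mul_nonsing_inv A hu]

lemma avgf_aff {n : ℕ} (f g : (Fin n → Bool) → ℝ) (c e : ℝ) (h : ∀ b, f b = e * g b + c)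
    (S : Fin n → Prop) (s : Fin n → Bool) : avgf f S s = e * avgf g S s + c := by
  simp only [avgf, h, Finset.sum_add_distrib, ← Finset.mul_sum]
  simp
  field_simp

lemma Lmat_dgrad {d : ℕ} (A : Matrix (Fin d) (Fin d) ℝ) (ε : ℝ) (hε : 0 < ε)
    (y : (Fin d → ℝ) → Fin d → ℝ) (k : Fin d → ℤ) (T : Tix d) :
    Lmat T.1 T.2 (fun j b => y (cellCorner d A ε 0 k b) j) =
      ε • Lmat T.1 T.2 (dgrad d A ε 0 y k) := by
  ext j i
  have h := avgf_aff (fun b => y (cellCorner d A ε 0 k b) j) (dgrad d A ε 0 y k j)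
    ((∑ b' : Fin d → Bool, y (cellCorner d A ε 0 k b') j) / 2 ^ d) ε (fun b => by
      unfold dgrad; rw [mul_div_cancel₀ _ hε.ne']; ring)
  simp only [Lmat, Matrix.smul_apply, smul_eq_mul, h]
  ring

lemma perp_dgrad {d : ℕ} (A : Matrix (Fin d) (Fin d) ℝ) (ε : ℝ)
    (y : (Fin d → ℝ) → Fin d → ℝ) (k : Fin d → ℤ) : PerpTrans (dgrad d A ε 0 y k) := by
  intro j
  simp only [dgrad, ← Finset.sum_div, Finset.sum_sub_distrib]
  simp

lemma ref_latPt {d : ℕ} (A : Matrix (Fin d) (Fin d) ℝ) (hA : 0 < A.det) (ε : ℝ) (hε : 0 < ε)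
    (k : Fin d → ℤ) (u : Fin d → ℝ) :
    (fun i => (ε • A)⁻¹.mulVec (latPt d A ε 0 k u) i - (0 : Fin d → ℝ) i - (k i : ℝ)) = u := by
  have hu : IsUnit A.det := hA.ne'.isUnit
  funext i
  unfold latPt
  rw [inv_smul_mat A hA ε hε, Matrix.smul_mulVec, Matrix.mulVec_smul, smul_smul,
    inv_mul_cancel₀ hε.ne', one_smul, Matrix.mulVec_mulVec, Matrix.nonsing_inv_mul A hu,
    Matrix.one_mulVec]
  simp

lemma grad_sector {d : ℕ} (A : Matrix (Fin d) (Fin d) ℝ) (hA : 0 < A.det) (ε : ℝ) (hε : 0 < ε)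
    (y : (Fin d → ℝ) → Fin d → ℝ) (k : Fin d → ℤ) (T : Tix d) (u : Fin d → ℝ)
    (hu : u ∈ Sector T) :
    gradM d (cellInterp d A ε 0 y k) (latPt d A ε 0 k u) = Gr A T (dgrad d A ε 0 y k) := by
  set Y : CellMat d := fun j b => y (cellCorner d A ε 0 k b) j with hY
  set B := (ε • A)⁻¹ with hB
  set M := Lmat T.1 T.2 Y with hM
  have hMB : M * B = Gr A T (dgrad d A ε 0 y k) := by
    rw [hM, hY, Lmat_dgrad A ε hε, hB, inv_smul_mat A hA ε hε, Matrix.smul_mul, Matrix.mul_smul,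
      smul_smul, mul_inv_cancel₀ hε.ne', one_smul]
    rfl
  set c : Fin d → ℝ := fun j => avgf (Y j) (fun _ => False) T.2 -
    M.mulVec (fun i => (k i : ℝ) + 1 / 2) j with hc
  have hev : cellInterp d A ε 0 y k =ᶠ[nhds (latPt d A ε 0 k u)]
      fun x => c + (Matrix.toLin' (M * B)).toContinuousLinearMap x := by
    have hcont : Continuous fun x : Fin d → ℝ =>
        (fun i => B.mulVec x i - (0 : Fin d → ℝ) i - (k i : ℝ)) := by
      refine continuous_pi fun i => ?_
      have : Continuous fun x : Fin d → ℝ => B.mulVec x :=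
        (Matrix.toLin' B).continuous_of_finiteDimensional
      have := (continuous_apply i).comp this
      exact (this.sub continuous_const).sub continuous_const
    have hmem : (fun i => B.mulVec (latPt d A ε 0 k u) i - (0 : Fin d → ℝ) i - (k i : ℝ)) ∈
        Sector T := by
      rw [hB, ref_latPt A hA ε hε]; exact hu
    have hnb := hcont.continuousAt.preimage_mem_nhds ((Sector_open T).mem_nhds hmem)
    filter_upwards [hnb] with x hx
    funext j
    have hx' : (fun i => B.mulVec x i - (0 : Fin d → ℝ) i - (k i : ℝ)) ∈ Sector T := hx
    have e := interp_sector hx' (Y j)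
    unfold cellInterp
    rw [← hB]
    change cubeInterp d (Y j) _ = _
    rw [e]
    simp only [hc, Pi.add_apply, LinearMap.coe_toContinuousLinearMap', Matrix.toLin'_apply,
      ← Matrix.mulVec_mulVec]
    have : ∀ v : Fin d → ℝ, M.mulVec v j = ∑ i, M j i * v i := fun v => rfl
    rw [this, this, sub_add, sub_eq_add_neg, ← Finset.sum_sub_distrib, ← Finset.sum_neg_distrib]
    congr 1
    refine Finset.sum_congr rfl fun i _ => ?_
    simp only [hM, Lmat, Pi.zero_apply]
    ring
  funext j i
  have hd : HasFDerivAt (fun x => c + (Matrix.toLin' (M * B)).toContinuousLinearMap x)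
      ((Matrix.toLin' (M * B)).toContinuousLinearMap) (latPt d A ε 0 k u) :=
    ((Matrix.toLin' (M * B)).toContinuousLinearMap.hasFDerivAt).const_add c
  unfold gradM
  rw [hev.fderiv_eq, hd.fderiv, ← hMB]
  simp
  rfl

lemma mean_formula {d : ℕ} (A : Matrix (Fin d) (Fin d) ℝ) (hA : 0 < A.det) (ε : ℝ) (hε : 0 < ε)
    (y : (Fin d → ℝ) → Fin d → ℝ) (k : Fin d → ℤ) (h : (Fin d → Fin d → ℝ) → ℝ) :
    (1 / (ε ^ d * A.det)) *
      ∫ x in cellRegion d A ε 0 k, h (gradM d (cellInterp d A ε 0 y k) x) =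
    ∑ T : Tix d, volume.real (Sector T ∩ unitCube d) * h (Gr A T (dgrad d A ε 0 y k)) := by
  have hcube : MeasurableSet (unitCube d) := by
    rw [unitCube_eq]; exact MeasurableSet.univ_pi fun _ => measurableSet_Ico
  have himg : cellRegion d A ε 0 k = latPt d A ε 0 k '' unitCube d := by
    ext x
    constructor
    · rintro ⟨u, hu, rfl⟩; exact ⟨u, hu, rfl⟩
    · rintro ⟨u, hu, rfl⟩; exact ⟨u, hu, rfl⟩
  have hder : ∀ u ∈ unitCube d, HasFDerivWithinAt (latPt d A ε 0 k)
      ((Matrix.toLin' (ε • A)).toContinuousLinearMap) (unitCube d) u := by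
    intro u _
    have e : latPt d A ε 0 k = fun u => ε • A.mulVec (fun i => (k i : ℝ)) +
        (Matrix.toLin' (ε • A)).toContinuousLinearMap u := by
      funext u
      simp only [latPt, LinearMap.coe_toContinuousLinearMap', Matrix.toLin'_apply,
        Matrix.smul_mulVec]
      rw [← smul_add, ← Matrix.mulVec_add]
      congr 2
      funext i
      simp
    rw [e]
    exact (((Matrix.toLin' (ε • A)).toContinuousLinearMap.hasFDerivAt).const_add _).hasFDerivWithinAt
  have hinj : InjOn (latPt d A ε 0 k) (unitCube d) := by
    intro u _ v _ huv
    rw [← ref_latPt A hA ε hε k u, ← ref_latPt A hA ε hε k v, huv]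
  have hdet : |((Matrix.toLin' (ε • A)).toContinuousLinearMap).det| = ε ^ d * A.det := by
    rw [LinearMap.det_toContinuousLinearMap, LinearMap.det_toLin', Matrix.det_smul]
    simp only [Fintype.card_fin]
    rw [abs_of_pos (by positivity)]
  rw [himg, integral_image_eq_integral_abs_det_fderiv_smul volume hcube hder hinj]
  simp only [hdet, smul_eq_mul]
  rw [integral_const_mul, ← mul_assoc, one_div, inv_mul_cancel₀ (by positivity), one_mul]
  have hae : unitCube d =ᵐ[volume] ⋃ T : Tix d, Sector T ∩ unitCube d := by
    filter_upwards [ae_sector d] with u hu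
    obtain ⟨T, hT⟩ := hu
    refine propext ⟨fun h => mem_iUnion.2 ⟨T, hT, h⟩, fun h => ?_⟩
    obtain ⟨T, hT⟩ := mem_iUnion.1 h
    exact hT.2
  have hms : ∀ T : Tix d, MeasurableSet (Sector T ∩ unitCube d) := fun T =>
    (Sector_open T).measurableSet.inter hcube
  have hcongr : ∀ T : Tix d, EqOn
      (fun u => h (gradM d (cellInterp d A ε 0 y k) (latPt d A ε 0 k u)))
      (fun _ => h (Gr A T (dgrad d A ε 0 y k))) (Sector T ∩ unitCube d) := by
    intro T u hu
    simp only [grad_sector A hA ε hε y k T u hu.1]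
  have hfin : ∀ T : Tix d, volume (Sector T ∩ unitCube d) ≠ ⊤ := fun T hT => by
    have := Sector_pos T
    rw [Measure.real, hT] at this
    simp at this
  rw [setIntegral_congr_set hae, integral_iUnion_fintype hms]
  · refine Finset.sum_congr rfl fun T _ => ?_
    rw [setIntegral_congr_fun (hms T) (hcongr T), setIntegral_const, smul_eq_mul]
  · exact (Sector_disj d).mono fun T T' hd => hd.mono inter_subset_left inter_subset_left
  · intro T
    rw [integrableOn_congr_fun (hcongr T) (hms T)]
    exact integrableOn_const (hfin T)

/-- Norm equivalence for the piecewise affine interpolation on intact cells: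
for every `1 ≤ p < ∞` there are constants `c, C > 0` depending only on `p`, `d` and `A` such
that the mean of `dist^p(∇ỹ, SO(d))` (resp. `|∇ỹ|^p`) over a cell is comparable to
`dist^p(∇̄y, SO̅(d))` (resp. `|∇̄y|^p`). -/
theorem interpolation_norm_equivalence
    (d : ℕ) (hd : 2 ≤ d) (A : Matrix (Fin d) (Fin d) ℝ) (hA : 0 < A.det)
    (p : ℝ) (hp : 1 ≤ p) :
    ∃ c > (0 : ℝ), ∃ C > (0 : ℝ), ∀ ε : ℝ, 0 < ε → ∀ Cint : ℝ, 1 ≤ Cint →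
      ∀ y : (Fin d → ℝ) → Fin d → ℝ, ∀ k : Fin d → ℤ, IntactCell d A ε 0 Cint y k →
        (c * distSObar d A (dgrad d A ε 0 y k) ^ p ≤
          (1 / (ε ^ d * A.det)) *
            ∫ x in cellRegion d A ε 0 k, distSO d (gradM d (cellInterp d A ε 0 y k) x) ^ p) ∧
        ((1 / (ε ^ d * A.det)) *
            ∫ x in cellRegion d A ε 0 k, distSO d (gradM d (cellInterp d A ε 0 y k) x) ^ p ≤
          C * distSObar d A (dgrad d A ε 0 y k) ^ p) ∧
        (c * mnorm (dgrad d A ε 0 y k) ^ p ≤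
          (1 / (ε ^ d * A.det)) *
            ∫ x in cellRegion d A ε 0 k, sqnorm d (gradM d (cellInterp d A ε 0 y k) x) ^ p) ∧
        ((1 / (ε ^ d * A.det)) *
            ∫ x in cellRegion d A ε 0 k, sqnorm d (gradM d (cellInterp d A ε 0 y k) x) ^ p ≤
          C * mnorm (dgrad d A ε 0 y k) ^ p) := by
  obtain ⟨K1, hK1, h1⟩ := lower_dist hd A hA
  obtain ⟨K2, hK2, h2⟩ := lower_norm A hA
  obtain ⟨K3, hK3, h3⟩ := upper_dist A hA
  obtain ⟨K4, hK4, h4⟩ := upper_norm A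
  set w : Tix d → ℝ := fun T => volume.real (Sector T ∩ unitCube d) with hw
  have hw0 : ∀ T, 0 < w T := fun T => Sector_pos T
  have hwi : 0 ≤ ∑ T, (w T)⁻¹ := Finset.sum_nonneg fun T _ => (inv_pos.2 (hw0 T)).le
  have hws : 0 ≤ ∑ T, w T := Finset.sum_nonneg fun T _ => (hw0 T).le
  set D1 := K1 ^ p * (Fintype.card (Tix d) : ℝ) ^ (p - 1) * ∑ T, (w T)⁻¹ with hD1
  set D2 := K2 ^ p * (Fintype.card (Tix d) : ℝ) ^ (p - 1) * ∑ T, (w T)⁻¹ with hD2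
  set D3 := K3 ^ p * ∑ T, w T with hD3
  set D4 := K4 ^ p * ∑ T, w T with hD4
  have p1 : 0 ≤ D1 := by positivity
  have p2 : 0 ≤ D2 := by positivity
  have p3 : 0 ≤ D3 := by positivity
  have p4 : 0 ≤ D4 := by positivity
  refine ⟨1 / (D1 + D2 + 1), by positivity, D3 + D4 + 1, by positivity, ?_⟩
  intro ε hε Cint _ y k _
  rw [mean_formula A hA ε hε y k (fun F => distSO d F ^ p),
    mean_formula A hA ε hε y k (fun F => sqnorm d F ^ p)]
  set G := dgrad d A ε 0 y k with hG
  have hP : PerpTrans G := perp_dgrad A ε y k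
  have n1 : 0 ≤ distSObar d A G := distSObar_nonneg A G
  have n2 : 0 ≤ mnorm G := Real.sqrt_nonneg _
  have a1 := avg_lower w (fun T => distSO d (Gr A T G)) hw0 (fun T => distSO_nonneg _) p hp K1
    _ hK1 n1 (h1 G hP)
  have a2 := avg_lower w (fun T => sqnorm d (Gr A T G)) hw0 (fun T => Real.sqrt_nonneg _) p hp K2
    _ hK2 n2 (h2 G hP)
  have a3 := avg_upper w (fun T => distSO d (Gr A T G)) hw0 (fun T => distSO_nonneg _) p hp K3
    _ hK3.le n1 (h3 G)
  have a4 := avg_upper w (fun T => sqnorm d (Gr A T G)) hw0 (fun T => Real.sqrt_nonneg _) p hp K4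
    _ hK4.le n2 (h4 G)
  rw [← hD1] at a1
  rw [← hD2] at a2
  rw [← hD3] at a3
  rw [← hD4] at a4
  have r1 : 0 ≤ distSObar d A G ^ p := Real.rpow_nonneg n1 p
  have r2 : 0 ≤ mnorm G ^ p := Real.rpow_nonneg n2 p
  have s1 : 0 ≤ ∑ T, w T * distSO d (Gr A T G) ^ p := Finset.sum_nonneg fun T _ =>
    mul_nonneg (hw0 T).le (Real.rpow_nonneg (distSO_nonneg _) p)
  have s2 : 0 ≤ ∑ T, w T * sqnorm d (Gr A T G) ^ p := Finset.sum_nonneg fun T _ =>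
    mul_nonneg (hw0 T).le (Real.rpow_nonneg (Real.sqrt_nonneg _) p)
  refine ⟨?_, ?_, ?_, ?_⟩
  · rw [one_div, inv_mul_le_iff₀ (by positivity)]
    exact a1.trans (mul_le_mul_of_nonneg_right (by linarith) s1)
  · exact a3.trans (mul_le_mul_of_nonneg_right (by linarith) r1)
  · rw [one_div, inv_mul_le_iff₀ (by positivity)]
    exact a2.trans (mul_le_mul_of_nonneg_right (by linarith) s2)
  · exact a4.trans (mul_le_mul_of_nonneg_right (by linarith) r2)

end Cleavage
end
end
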